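/- arXiv:2406.09510 — 3 statements merged into one kernel-verified Lean document; each statement's English description precedes it below -/
import Mathlib

section
/- For every N ≥ 3 that is either odd or divisible by 4, there exists ε > 0 (depending on N) such that for all real u with 1−ε < u < 1, the N-party ring distribution P_Q(a₁,…,a_N) is nonlocal on the triangle network obtained by merging parties A₃,…,A_N into a single party M: there do not exist types Λ₁, Λ₂, Λ₃ with probability distributions μ₁, μ₂, μ₃ and response kernels p₁(a₁|λ₃,λ₁), p₂(a₂|λ₁,λ₂), p_M(a₃,…,a_N|λ₂,λ₃) (each a_j ∈ {0, 1₀, 1₁, 2}, the merged party outputting (a₃,…,a_N) jointly) such that P_Q(a₁,…,a_N) equals the expectation over independently sampled λ₁, λ₂, λ₃ of the product p₁(a₁|λ₃,λ₁)·p₂(a₂|λ₁,λ₂)·p_M(a₃,…,a_N|λ₂,λ₃), for all outcomes. -/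
open MeasureTheory

noncomputable def uco (u : ℝ) : Fin 2 → ℝ := ![u, Real.sqrt (1 - u ^ 2)]
noncomputable def vco (u : ℝ) : Fin 2 → ℝ := ![Real.sqrt (1 - u ^ 2), -u]

inductive Outc where
  | zero : Outc
  | one : Fin 2 → Outc
  | two : Outc
  deriving DecidableEq, Fintype

noncomputable def psiPlus : Fin 2 → Fin 2 → ℝ := fun i j =>
  if i = 0 ∧ j = 1 then (Real.sqrt 2)⁻¹ else if i = 1 ∧ j = 0 then (Real.sqrt 2)⁻¹ else 0

noncomputable def basisVec (u : ℝ) : Outc → Fin 2 → Fin 2 → ℝ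
  | Outc.zero => fun l r => if l = 0 ∧ r = 0 then 1 else 0
  | Outc.one i => fun l r => if l = 0 ∧ r = 1 then uco u i else if l = 1 ∧ r = 0 then vco u i else 0
  | Outc.two => fun l r => if l = 1 ∧ r = 1 then 1 else 0

def finNext {N : ℕ} (k : Fin N) : Fin N := ⟨(k.val + 1) % N, Nat.mod_lt _ k.pos⟩

noncomputable def ringAmp (N : ℕ) (u : ℝ) (a : Fin N → Outc) : ℝ :=
  ∑ L : Fin N → Fin 2, ∑ R : Fin N → Fin 2,
    (∏ k, basisVec u (a k) (L k) (R k)) * ∏ k, psiPlus (R k) (L (finNext k))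

noncomputable def ringP (N : ℕ) (u : ℝ) (a : Fin N → Outc) : ℝ := ringAmp N u a ^ 2

/-- Bounded measurable real functions. -/
def BddMeas {Ω : Type*} [MeasurableSpace Ω] (f : Ω → ℝ) : Prop :=
  Measurable f ∧ ∃ C, ∀ ω, |f ω| ≤ C

namespace BddMeas

variable {Ω Ω' : Type*} [MeasurableSpace Ω] [MeasurableSpace Ω'] {f g : Ω → ℝ}

lemma const (c : ℝ) : BddMeas (fun _ : Ω => c) := ⟨measurable_const, |c|, fun _ => le_rfl⟩

lemma add (hf : BddMeas f) (hg : BddMeas g) : BddMeas (fun ω => f ω + g ω) := by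
  obtain ⟨mf, C, hC⟩ := hf
  obtain ⟨mg, D, hD⟩ := hg
  exact ⟨mf.add mg, C + D, fun ω => (abs_add_le _ _).trans (add_le_add (hC ω) (hD ω))⟩

lemma mul (hf : BddMeas f) (hg : BddMeas g) : BddMeas (fun ω => f ω * g ω) := by
  obtain ⟨mf, C, hC⟩ := hf
  obtain ⟨mg, D, hD⟩ := hg
  refine ⟨mf.mul mg, C * D, fun ω => ?_⟩
  rw [abs_mul]
  exact mul_le_mul (hC ω) (hD ω) (abs_nonneg _) ((abs_nonneg _).trans (hC ω))

lemma neg (hf : BddMeas f) : BddMeas (fun ω => -f ω) := by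
  simpa using (const (-1)).mul hf

lemma sub (hf : BddMeas f) (hg : BddMeas g) : BddMeas (fun ω => f ω - g ω) := by
  simpa [sub_eq_add_neg] using hf.add hg.neg

lemma pow (hf : BddMeas f) (n : ℕ) : BddMeas (fun ω => f ω ^ n) := by
  induction n with
  | zero => simpa using const 1
  | succ n ih => simpa [pow_succ] using ih.mul hf

lemma sum {ι : Type*} (s : Finset ι) {F : ι → Ω → ℝ} (hF : ∀ i, BddMeas (F i)) :
    BddMeas (fun ω => ∑ i ∈ s, F i ω) := by
  classical
  induction s using Finset.induction_on with
  | empty => simpa using const 0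
  | insert i s hi ih => simpa [Finset.sum_insert hi] using (hF i).add ih

lemma comp (hf : BddMeas f) {φ : Ω' → Ω} (hφ : Measurable φ) : BddMeas (fun x => f (φ x)) :=
  ⟨hf.1.comp hφ, hf.2.imp fun _ hC x => hC (φ x)⟩

lemma integrable (hf : BddMeas f) (μ : Measure Ω) [IsFiniteMeasure μ] : Integrable f μ := by
  obtain ⟨mf, C, hC⟩ := hf
  exact Integrable.of_bound mf.aestronglyMeasurable C (Filter.Eventually.of_forall hC)

lemma integral_right {F : Ω × Ω' → ℝ} (hF : BddMeas F) (ν : Measure Ω')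
    [IsProbabilityMeasure ν] : BddMeas (fun x => ∫ y, F (x, y) ∂ν) := by
  obtain ⟨mF, C, hC⟩ := hF
  refine ⟨mF.stronglyMeasurable.integral_prod_right'.measurable, C, fun x => ?_⟩
  have := norm_integral_le_of_norm_le_const (μ := ν) (f := fun y => F (x, y)) (C := C)
    (Filter.Eventually.of_forall fun y => hC (x, y))
  simpa using this

lemma ae_eq_zero {μ : Measure Ω} [IsFiniteMeasure μ] (hf : BddMeas f)
    (h : ∫ ω, f ω * f ω ∂μ = 0) : ∀ᵐ ω ∂μ, f ω = 0 := by
  have := (integral_eq_zero_iff_of_nonneg (fun ω => mul_self_nonneg (f ω))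
    ((hf.mul hf).integrable μ)).1 h
  filter_upwards [this] with ω hω
  simpa using hω

end BddMeas

section Triangle

variable {Λ₁ Λ₂ Λ₃ : Type*} [MeasurableSpace Λ₁] [MeasurableSpace Λ₂] [MeasurableSpace Λ₃]
  (μ₁ : Measure Λ₁) (μ₂ : Measure Λ₂) (μ₃ : Measure Λ₃)
  [IsProbabilityMeasure μ₁] [IsProbabilityMeasure μ₂] [IsProbabilityMeasure μ₃]

lemma integral_triple {f : Λ₁ × Λ₂ × Λ₃ → ℝ} (hf : BddMeas f) :
    ∫ ω, f ω ∂(μ₁.prod (μ₂.prod μ₃)) = ∫ x₁, ∫ x₂, ∫ x₃, f (x₁, x₂, x₃) ∂μ₃ ∂μ₂ ∂μ₁ := by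
  rw [integral_prod _ (hf.integrable _)]
  refine integral_congr_ae (Filter.Eventually.of_forall fun x₁ => ?_)
  exact integral_prod _ ((hf.comp (measurable_prodMk_left (x := x₁))).integrable _)

lemma integral_triple_symm {f : Λ₁ × Λ₂ × Λ₃ → ℝ} (hf : BddMeas f) :
    ∫ ω, f ω ∂(μ₁.prod (μ₂.prod μ₃)) = ∫ x₂, ∫ x₃, ∫ x₁, f (x₁, x₂, x₃) ∂μ₁ ∂μ₃ ∂μ₂ := by
  rw [integral_prod_symm _ (hf.integrable _)]
  exact integral_prod _ ((hf.comp measurable_swap).integral_right μ₁ |>.integrable _)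

variable {μ₁ μ₂ μ₃}

/-- If three bounded functions attached to the parties of the triangle add up to zero almost
surely, then each is a difference of functions of the single sources. -/
lemma exists_potential {X : Λ₃ × Λ₁ → ℝ} {Y : Λ₁ × Λ₂ → ℝ} {Z : Λ₂ × Λ₃ → ℝ}
    (hX : BddMeas X) (hY : BddMeas Y) (hZ : BddMeas Z)
    (hsum : ∀ᵐ ω ∂(μ₁.prod (μ₂.prod μ₃)),
      X (ω.2.2, ω.1) + Y (ω.1, ω.2.1) + Z (ω.2.1, ω.2.2) = 0)
    (hX0 : ∫ ω, X (ω.2.2, ω.1) ∂(μ₁.prod (μ₂.prod μ₃)) = 0)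
    (hY0 : ∫ ω, Y (ω.1, ω.2.1) ∂(μ₁.prod (μ₂.prod μ₃)) = 0) :
    ∃ (a : Λ₁ → ℝ) (e : Λ₂ → ℝ) (b : Λ₃ → ℝ), BddMeas a ∧ BddMeas e ∧ BddMeas b ∧
      ∫ x, a x ∂μ₁ = 0 ∧ ∫ x, e x ∂μ₂ = 0 ∧ ∫ x, b x ∂μ₃ = 0 ∧
      ∀ᵐ ω ∂(μ₁.prod (μ₂.prod μ₃)),
        X (ω.2.2, ω.1) = a ω.1 + b ω.2.2 ∧ Y (ω.1, ω.2.1) = -a ω.1 - e ω.2.1 := by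
  set μ := μ₁.prod (μ₂.prod μ₃) with hμ
  let a : Λ₁ → ℝ := fun x₁ => ∫ x₃, X (x₃, x₁) ∂μ₃
  let b : Λ₃ → ℝ := fun x₃ => ∫ x₁, X (x₃, x₁) ∂μ₁
  let e : Λ₂ → ℝ := fun x₂ => ∫ x₃, Z (x₂, x₃) ∂μ₃
  let f : Λ₂ → ℝ := fun x₂ => ∫ x₁, Y (x₁, x₂) ∂μ₁
  have ha : BddMeas a := (hX.comp measurable_swap).integral_right μ₃
  have hb : BddMeas b := hX.integral_right μ₁
  have he : BddMeas e := hZ.integral_right μ₃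
  have hf : BddMeas f := (hY.comp measurable_swap).integral_right μ₁
  have pX : BddMeas (fun ω : Λ₁ × Λ₂ × Λ₃ => X (ω.2.2, ω.1)) := hX.comp (by fun_prop)
  have pY : BddMeas (fun ω : Λ₁ × Λ₂ × Λ₃ => Y (ω.1, ω.2.1)) := hY.comp (by fun_prop)
  have pZ : BddMeas (fun ω : Λ₁ × Λ₂ × Λ₃ => Z (ω.2.1, ω.2.2)) := hZ.comp (by fun_prop)
  have pa : BddMeas (fun ω : Λ₁ × Λ₂ × Λ₃ => a ω.1) := ha.comp (by fun_prop)
  have pb : BddMeas (fun ω : Λ₁ × Λ₂ × Λ₃ => b ω.2.2) := hb.comp (by fun_prop)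
  have pe : BddMeas (fun ω : Λ₁ × Λ₂ × Λ₃ => e ω.2.1) := he.comp (by fun_prop)
  have pf : BddMeas (fun ω : Λ₁ × Λ₂ × Λ₃ => f ω.2.1) := hf.comp (by fun_prop)
  have ha0 : ∫ x, a x ∂μ₁ = 0 := by
    rw [← hX0, integral_triple _ _ _ pX]
    simp [a]
  have hb0 : ∫ x, b x ∂μ₃ = 0 := by
    rw [← hX0, integral_triple_symm _ _ _ pX]
    simp [b]
  have hZ0 : ∫ ω, Z (ω.2.1, ω.2.2) ∂μ = 0 := by
    have : ∫ ω, (X (ω.2.2, ω.1) + Y (ω.1, ω.2.1) + Z (ω.2.1, ω.2.2)) ∂μ = 0 :=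
      integral_eq_zero_of_ae hsum
    rw [integral_add ((pX.add pY).integrable _) (pZ.integrable _),
      integral_add (pX.integrable _) (pY.integrable _), hX0, hY0] at this
    simpa using this
  have he0 : ∫ x, e x ∂μ₂ = 0 := by
    rw [← hZ0, integral_triple _ _ _ pZ]
    simp [e]
  -- orthogonality of a bounded function to the vanishing sum
  have orth {k : Λ₁ × Λ₂ × Λ₃ → ℝ} (hk : BddMeas k) :
      ∫ ω, k ω * X (ω.2.2, ω.1) ∂μ + ∫ ω, k ω * Y (ω.1, ω.2.1) ∂μ
        + ∫ ω, k ω * Z (ω.2.1, ω.2.2) ∂μ = 0 := by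
    rw [← integral_add ((hk.mul pX).integrable _) ((hk.mul pY).integrable _),
      ← integral_add (((hk.mul pX).add (hk.mul pY)).integrable _) ((hk.mul pZ).integrable _)]
    refine integral_eq_zero_of_ae ?_
    filter_upwards [hsum] with ω hω
    rw [Pi.zero_apply, ← mul_add, ← mul_add, hω, mul_zero]
  have hYae : ∀ᵐ ω ∂μ, Y (ω.1, ω.2.1) + a ω.1 + e ω.2.1 = 0 := by
    have hk := (pY.add pa).add pe
    refine BddMeas.ae_eq_zero hk ?_
    have h1 : ∫ ω, (Y (ω.1, ω.2.1) + a ω.1 + e ω.2.1) * X (ω.2.2, ω.1) ∂μ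
        = ∫ ω, (Y (ω.1, ω.2.1) + a ω.1 + e ω.2.1) * a ω.1 ∂μ := by
      rw [integral_triple _ _ _ (hk.mul pX), integral_triple _ _ _ (hk.mul pa)]
      simp [integral_const_mul, a]
    have h2 : ∫ ω, (Y (ω.1, ω.2.1) + a ω.1 + e ω.2.1) * Z (ω.2.1, ω.2.2) ∂μ
        = ∫ ω, (Y (ω.1, ω.2.1) + a ω.1 + e ω.2.1) * e ω.2.1 ∂μ := by
      rw [integral_triple _ _ _ (hk.mul pZ), integral_triple _ _ _ (hk.mul pe)]
      simp [integral_const_mul, e]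
    have h3 := orth hk
    rw [h1, h2] at h3
    simp only [mul_add (_ + _ + _)]
    rw [integral_add (((hk.mul pY).add (hk.mul pa)).integrable _) ((hk.mul pe).integrable _),
      integral_add ((hk.mul pY).integrable _) ((hk.mul pa).integrable _)]
    linarith
  have hZae : ∀ᵐ ω ∂μ, Z (ω.2.1, ω.2.2) + b ω.2.2 + f ω.2.1 = 0 := by
    have hk := (pZ.add pb).add pf
    refine BddMeas.ae_eq_zero hk ?_
    have h1 : ∫ ω, (Z (ω.2.1, ω.2.2) + b ω.2.2 + f ω.2.1) * X (ω.2.2, ω.1) ∂μ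
        = ∫ ω, (Z (ω.2.1, ω.2.2) + b ω.2.2 + f ω.2.1) * b ω.2.2 ∂μ := by
      rw [integral_triple_symm _ _ _ (hk.mul pX), integral_triple_symm _ _ _ (hk.mul pb)]
      simp [integral_const_mul, b]
    have h2 : ∫ ω, (Z (ω.2.1, ω.2.2) + b ω.2.2 + f ω.2.1) * Y (ω.1, ω.2.1) ∂μ
        = ∫ ω, (Z (ω.2.1, ω.2.2) + b ω.2.2 + f ω.2.1) * f ω.2.1 ∂μ := by
      rw [integral_triple_symm _ _ _ (hk.mul pY), integral_triple_symm _ _ _ (hk.mul pf)]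
      simp [integral_const_mul, f]
    have h3 := orth hk
    rw [h1, h2] at h3
    simp only [mul_add (_ + _ + _)]
    rw [integral_add (((hk.mul pZ).add (hk.mul pb)).integrable _) ((hk.mul pf).integrable _),
      integral_add ((hk.mul pZ).integrable _) ((hk.mul pb).integrable _)]
    linarith
  have hef : ∀ᵐ ω ∂μ, e ω.2.1 + f ω.2.1 = 0 := by
    have hk := pe.add pf
    refine BddMeas.ae_eq_zero hk ?_
    have h1 : ∫ ω, (e ω.2.1 + f ω.2.1) * (e ω.2.1 + f ω.2.1) ∂μ
        = ∫ ω, (e ω.2.1 + f ω.2.1) * (X (ω.2.2, ω.1) - a ω.1 - b ω.2.2) ∂μ := by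
      refine integral_congr_ae ?_
      filter_upwards [hsum, hYae, hZae] with ω h₁ h₂ h₃
      have : e ω.2.1 + f ω.2.1 = X (ω.2.2, ω.1) - a ω.1 - b ω.2.2 := by linarith
      rw [← this]
    have h2 : ∫ ω, (e ω.2.1 + f ω.2.1) * X (ω.2.2, ω.1) ∂μ = 0 := by
      rw [integral_triple_symm _ _ _ (hk.mul pX)]
      have : ∀ x₃, ∫ x₁, X (x₃, x₁) ∂μ₁ = b x₃ := fun _ => rfl
      simp [integral_const_mul, this, hb0]
    have h3 : ∫ ω, (e ω.2.1 + f ω.2.1) * a ω.1 ∂μ = 0 := by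
      rw [integral_triple_symm _ _ _ (hk.mul pa)]
      simp [integral_const_mul, ha0]
    have h4 : ∫ ω, (e ω.2.1 + f ω.2.1) * b ω.2.2 ∂μ = 0 := by
      rw [integral_triple _ _ _ (hk.mul pb)]
      simp [integral_const_mul, hb0]
    rw [h1]
    simp only [mul_sub]
    rw [integral_sub (((hk.mul pX).sub (hk.mul pa)).integrable _) ((hk.mul pb).integrable _),
      integral_sub ((hk.mul pX).integrable _) ((hk.mul pa).integrable _), h2, h3, h4]
    simp
  refine ⟨a, e, b, ha, he, hb, ha0, he0, hb0, ?_⟩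
  filter_upwards [hsum, hYae, hZae, hef] with ω h₁ h₂ h₃ h₄
  constructor <;> linarith

lemma integral_fst_mul_snd {a : Λ₁ → ℝ} {e : Λ₂ → ℝ} (ha : BddMeas a) (he : BddMeas e) :
    ∫ ω, a ω.1 * e ω.2.1 ∂(μ₁.prod (μ₂.prod μ₃)) = (∫ x, a x ∂μ₁) * ∫ x, e x ∂μ₂ := by
  rw [integral_triple _ _ _ ((ha.comp (by fun_prop)).mul (he.comp (by fun_prop)))]
  simp [integral_const_mul, integral_mul_const]

lemma integral_fst_mul_trd {a : Λ₁ → ℝ} {b : Λ₃ → ℝ} (ha : BddMeas a) (hb : BddMeas b) :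
    ∫ ω, a ω.1 * b ω.2.2 ∂(μ₁.prod (μ₂.prod μ₃)) = (∫ x, a x ∂μ₁) * ∫ x, b x ∂μ₃ := by
  rw [integral_triple _ _ _ ((ha.comp (by fun_prop)).mul (hb.comp (by fun_prop)))]
  simp [integral_const_mul, integral_mul_const]

lemma integral_snd_mul_trd {e : Λ₂ → ℝ} {b : Λ₃ → ℝ} (he : BddMeas e) (hb : BddMeas b) :
    ∫ ω, e ω.2.1 * b ω.2.2 ∂(μ₁.prod (μ₂.prod μ₃)) = (∫ x, e x ∂μ₂) * ∫ x, b x ∂μ₃ := by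
  rw [integral_triple _ _ _ ((he.comp (by fun_prop)).mul (hb.comp (by fun_prop)))]
  simp [integral_const_mul, integral_mul_const]

/-- Second and fourth moments of the sum of two centred independent functions. -/
lemma moments_add_of_indep {Ω : Type*} [MeasurableSpace Ω] {μ : Measure Ω}
    [IsProbabilityMeasure μ] {f g : Ω → ℝ} (hf : BddMeas f) (hg : BddMeas g)
    (hind : ∀ i j : ℕ, ∫ ω, f ω ^ i * g ω ^ j ∂μ = (∫ ω, f ω ^ i ∂μ) * ∫ ω, g ω ^ j ∂μ)
    (hf0 : ∫ ω, f ω ∂μ = 0) (hg0 : ∫ ω, g ω ∂μ = 0) :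
    ∫ ω, (f ω + g ω) ^ 2 ∂μ = ∫ ω, f ω ^ 2 ∂μ + ∫ ω, g ω ^ 2 ∂μ ∧
    ∫ ω, (f ω + g ω) ^ 4 ∂μ = ∫ ω, f ω ^ 4 ∂μ
      + 6 * ((∫ ω, f ω ^ 2 ∂μ) * ∫ ω, g ω ^ 2 ∂μ) + ∫ ω, g ω ^ 4 ∂μ := by
  have h11 := hind 1 1
  have h13 := hind 1 3
  have h31 := hind 3 1
  have h22 := hind 2 2
  simp only [pow_one, hf0, hg0, mul_zero, zero_mul] at h11 h13 h31
  constructor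
  · have : ∀ ω, (f ω + g ω) ^ 2 = f ω ^ 2 + 2 * (f ω * g ω) + g ω ^ 2 := fun ω => by ring
    have m11 := (BddMeas.const 2).mul (hf.mul hg)
    simp only [this]
    rw [integral_add (((hf.pow 2).add m11).integrable μ) ((hg.pow 2).integrable μ),
      integral_add ((hf.pow 2).integrable μ) (m11.integrable μ), integral_const_mul, h11]
    ring
  · have : ∀ ω, (f ω + g ω) ^ 4 = f ω ^ 4 + 4 * (f ω ^ 3 * g ω) + 6 * (f ω ^ 2 * g ω ^ 2)
        + 4 * (f ω * g ω ^ 3) + g ω ^ 4 := fun ω => by ring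
    have m31 := (BddMeas.const 4).mul ((hf.pow 3).mul hg)
    have m22 := (BddMeas.const 6).mul ((hf.pow 2).mul (hg.pow 2))
    have m13 := (BddMeas.const 4).mul (hf.mul (hg.pow 3))
    simp only [this]
    rw [integral_add (((((hf.pow 4).add m31).add m22).add m13).integrable μ)
        ((hg.pow 4).integrable μ),
      integral_add ((((hf.pow 4).add m31).add m22).integrable μ) (m13.integrable μ),
      integral_add (((hf.pow 4).add m31).integrable μ) (m22.integrable μ),
      integral_add ((hf.pow 4).integrable μ) (m31.integrable μ)]
    simp only [integral_const_mul, h13, h31, h22]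
    ring

/-- A bounded function whose second and fourth moments are those of a uniform sign `± 1 / 2`
squares to `1 / 4` almost surely. -/
lemma sq_eq_of_moments {Ω : Type*} [MeasurableSpace Ω] {μ : Measure Ω}
    [IsProbabilityMeasure μ] {f : Ω → ℝ} (hf : BddMeas f)
    (h2 : ∫ ω, f ω ^ 2 ∂μ = 1 / 4) (h4 : ∫ ω, f ω ^ 4 ∂μ = 1 / 16) :
    ∀ᵐ ω ∂μ, f ω ^ 2 - 1 / 4 = 0 := by
  refine BddMeas.ae_eq_zero ((hf.pow 2).sub (.const _)) ?_
  have : ∀ ω, (f ω ^ 2 - 1 / 4) * (f ω ^ 2 - 1 / 4) = f ω ^ 4 - 1 / 2 * f ω ^ 2 + 1 / 16 :=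
    fun ω => by ring
  have i2 := (BddMeas.const (1 / 2)).mul (hf.pow 2)
  simp only [this]
  rw [integral_add (((hf.pow 4).sub i2).integrable μ) (integrable_const _),
    integral_sub ((hf.pow 4).integrable μ) (i2.integrable μ), integral_const_mul, h2, h4]
  norm_num

/-- Rigidity of token counting in the triangle: counts with the right second and fourth moments
come from a fair binary token emitted by each source. -/
lemma exists_tokens {X : Λ₃ × Λ₁ → ℝ} {Y : Λ₁ × Λ₂ → ℝ} {Z : Λ₂ × Λ₃ → ℝ}
    (hX : BddMeas X) (hY : BddMeas Y) (hZ : BddMeas Z)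
    (hsum : ∀ᵐ ω ∂(μ₁.prod (μ₂.prod μ₃)),
      X (ω.2.2, ω.1) + Y (ω.1, ω.2.1) + Z (ω.2.1, ω.2.2) = 0)
    (hX0 : ∫ ω, X (ω.2.2, ω.1) ∂(μ₁.prod (μ₂.prod μ₃)) = 0)
    (hY0 : ∫ ω, Y (ω.1, ω.2.1) ∂(μ₁.prod (μ₂.prod μ₃)) = 0)
    (hX2 : ∫ ω, X (ω.2.2, ω.1) ^ 2 ∂(μ₁.prod (μ₂.prod μ₃)) = 1 / 2)
    (hY2 : ∫ ω, Y (ω.1, ω.2.1) ^ 2 ∂(μ₁.prod (μ₂.prod μ₃)) = 1 / 2)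
    (hXY2 : ∫ ω, (X (ω.2.2, ω.1) + Y (ω.1, ω.2.1)) ^ 2 ∂(μ₁.prod (μ₂.prod μ₃)) = 1 / 2)
    (hX4 : ∫ ω, X (ω.2.2, ω.1) ^ 4 ∂(μ₁.prod (μ₂.prod μ₃)) = 1 / 2)
    (hY4 : ∫ ω, Y (ω.1, ω.2.1) ^ 4 ∂(μ₁.prod (μ₂.prod μ₃)) = 1 / 2)
    (hXY4 : ∫ ω, (X (ω.2.2, ω.1) + Y (ω.1, ω.2.1)) ^ 4 ∂(μ₁.prod (μ₂.prod μ₃)) = 1 / 2) :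
    ∃ (t₁ : Λ₁ → ℝ) (t₂ : Λ₂ → ℝ) (t₃ : Λ₃ → ℝ), BddMeas t₁ ∧ BddMeas t₂ ∧ BddMeas t₃ ∧
      ∫ x, t₁ x ∂μ₁ = 1 / 2 ∧ ∫ x, t₂ x ∂μ₂ = 1 / 2 ∧ ∫ x, t₃ x ∂μ₃ = 1 / 2 ∧
      ∀ᵐ ω ∂(μ₁.prod (μ₂.prod μ₃)),
        (t₁ ω.1 = 0 ∨ t₁ ω.1 = 1) ∧ (t₂ ω.2.1 = 0 ∨ t₂ ω.2.1 = 1) ∧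
        (t₃ ω.2.2 = 0 ∨ t₃ ω.2.2 = 1) ∧
        X (ω.2.2, ω.1) = t₁ ω.1 - t₃ ω.2.2 ∧ Y (ω.1, ω.2.1) = t₂ ω.2.1 - t₁ ω.1 := by
  obtain ⟨a, e, b, ha, he, hb, ha0, he0, hb0, hae⟩ := exists_potential hX hY hZ hsum hX0 hY0
  set μ := μ₁.prod (μ₂.prod μ₃) with hμ
  have pa : BddMeas (fun ω : Λ₁ × Λ₂ × Λ₃ => a ω.1) := ha.comp (by fun_prop)
  have pb : BddMeas (fun ω : Λ₁ × Λ₂ × Λ₃ => b ω.2.2) := hb.comp (by fun_prop)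
  have pe : BddMeas (fun ω : Λ₁ × Λ₂ × Λ₃ => e ω.2.1) := he.comp (by fun_prop)
  have Ea {k : Λ₁ → ℝ} (hk : BddMeas k) : ∫ ω, k ω.1 ∂μ = ∫ x, k x ∂μ₁ := by
    simpa using integral_fst_mul_snd (μ₁ := μ₁) (μ₂ := μ₂) (μ₃ := μ₃) hk (.const 1)
  have Ee {k : Λ₂ → ℝ} (hk : BddMeas k) : ∫ ω, k ω.2.1 ∂μ = ∫ x, k x ∂μ₂ := by
    simpa using integral_snd_mul_trd (μ₁ := μ₁) (μ₂ := μ₂) (μ₃ := μ₃) hk (.const 1)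
  have Eb {k : Λ₃ → ℝ} (hk : BddMeas k) : ∫ ω, k ω.2.2 ∂μ = ∫ x, k x ∂μ₃ := by
    simpa using integral_fst_mul_trd (μ₁ := μ₁) (μ₂ := μ₂) (μ₃ := μ₃) (.const 1) hk
  obtain ⟨ab2, ab4⟩ := moments_add_of_indep (μ := μ) pa pb
    (fun i j => by
      rw [Ea (ha.pow i), Eb (hb.pow j)]
      exact integral_fst_mul_trd (ha.pow i) (hb.pow j))
    (by rw [Ea ha, ha0]) (by rw [Eb hb, hb0])
  obtain ⟨ae2, ae4⟩ := moments_add_of_indep (μ := μ) pa pe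
    (fun i j => by
      rw [Ea (ha.pow i), Ee (he.pow j)]
      exact integral_fst_mul_snd (ha.pow i) (he.pow j))
    (by rw [Ea ha, ha0]) (by rw [Ee he, he0])
  obtain ⟨eb2, eb4⟩ := moments_add_of_indep (μ := μ) pe pb.neg
    (fun i j => by
      rw [Ee (he.pow i), Eb (hb.neg.pow j)]
      exact integral_snd_mul_trd (he.pow i) (hb.neg.pow j))
    (by rw [Ee he, he0]) (by rw [integral_neg, Eb hb, hb0, neg_zero])
  have cX (n : ℕ) : ∫ ω, X (ω.2.2, ω.1) ^ n ∂μ = ∫ ω, (a ω.1 + b ω.2.2) ^ n ∂μ :=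
    integral_congr_ae (by filter_upwards [hae] with ω h; rw [h.1])
  have cY (n : ℕ) (hn : Even n) :
      ∫ ω, Y (ω.1, ω.2.1) ^ n ∂μ = ∫ ω, (a ω.1 + e ω.2.1) ^ n ∂μ :=
    integral_congr_ae (by
      filter_upwards [hae] with ω h
      rw [h.2, ← hn.neg_pow]
      ring_nf)
  have cXY (n : ℕ) (hn : Even n) : ∫ ω, (X (ω.2.2, ω.1) + Y (ω.1, ω.2.1)) ^ n ∂μ
      = ∫ ω, (e ω.2.1 + -b ω.2.2) ^ n ∂μ :=
    integral_congr_ae (by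
      filter_upwards [hae] with ω h
      rw [h.1, h.2, ← hn.neg_pow]
      ring_nf)
  simp only [even_two.neg_pow, (by decide : Even 4).neg_pow] at eb2 eb4
  rw [cX, ab2] at hX2
  rw [cX, ab4] at hX4
  rw [cY _ even_two, ae2] at hY2
  rw [cY _ (by decide), ae4] at hY4
  rw [cXY _ even_two, eb2] at hXY2
  rw [cXY _ (by decide), eb4] at hXY4
  have a2 : ∫ ω, a ω.1 ^ 2 ∂μ = 1 / 4 := by linarith
  have b2 : ∫ ω, b ω.2.2 ^ 2 ∂μ = 1 / 4 := by linarith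
  have e2 : ∫ ω, e ω.2.1 ^ 2 ∂μ = 1 / 4 := by linarith
  rw [a2, b2] at hX4
  rw [a2, e2] at hY4
  rw [e2, b2] at hXY4
  have sa := sq_eq_of_moments pa a2 (by linarith)
  have sb := sq_eq_of_moments pb b2 (by linarith)
  have se := sq_eq_of_moments pe e2 (by linarith)
  have half {x : ℝ} (h : x ^ 2 - 1 / 4 = 0) : x = -1 / 2 ∨ x = 1 / 2 := by
    have : (x + 1 / 2) * (x - 1 / 2) = 0 := by linarith
    rcases mul_eq_zero.1 this with h | h
    · left; linarith
    · right; linarith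
  refine ⟨fun x => 1 / 2 + a x, fun x => 1 / 2 - e x, fun x => 1 / 2 - b x,
    (BddMeas.const _).add ha, (BddMeas.const _).sub he, (BddMeas.const _).sub hb, ?_, ?_, ?_, ?_⟩
  · rw [integral_add (integrable_const _) (ha.integrable _), ha0]; simp
  · rw [integral_sub (integrable_const _) (he.integrable _), he0]; simp
  · rw [integral_sub (integrable_const _) (hb.integrable _), hb0]; simp
  · filter_upwards [hae, sa, sb, se] with ω h h₁ h₃ h₂
    rw [h.1, h.2]
    refine ⟨?_, ?_, ?_, by ring, by ring⟩
    · rcases half h₁ with h | h <;> rw [h] <;> norm_num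
    · rcases half h₂ with h | h <;> rw [h] <;> norm_num
    · rcases half h₃ with h | h <;> rw [h] <;> norm_num

lemma abs_le_one_of_sum_eq_one {ι : Type*} [Fintype ι] {p : ι → ℝ}
    (h : (∀ i, 0 ≤ p i) ∧ ∑ i, p i = 1) (i : ι) : |p i| ≤ 1 := by
  rw [abs_of_nonneg (h.1 i), ← h.2]
  exact Finset.single_le_sum (fun i _ => h.1 i) (Finset.mem_univ i)

lemma integral_one_sub_eq_half {Ω : Type*} [MeasurableSpace Ω] {ν : Measure Ω}
    [IsProbabilityMeasure ν] {t : Ω → ℝ} (bt : BddMeas t) (ht : ∫ x, t x ∂ν = 1 / 2) :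
    ∫ x, (1 - t x) ∂ν = 1 / 2 := by
  rw [integral_sub (integrable_const _) (bt.integrable _), ht]
  simp
  norm_num

/-- If the outcomes of positive weight all carry the label `k`, the mean label is `k`. -/
lemma sum_mul_eq_of_support {ι : Type*} [Fintype ι] {p c : ι → ℝ} {k : ℝ}
    (hp : ∑ i, p i = 1) (h : ∀ i, p i ≠ 0 → c i = k) : ∑ i, c i * p i = k := by
  have : ∀ i, c i * p i = k * p i := fun i => by
    by_cases hi : p i = 0
    · simp [hi]
    · rw [h i hi]
  simp only [this]
  rw [← Finset.mul_sum, hp, mul_one]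

lemma exists_ne_zero_of_sum_eq_one {ι : Type*} [Fintype ι] {p : ι → ℝ} (hp : ∑ i, p i = 1) :
    ∃ i, p i ≠ 0 := by
  by_contra! h
  simp [h] at hp

/-- Token counting Bell inequality for the triangle. -/
theorem triangle_token_inequality {O β : Type*} [Fintype O] [Fintype β]
    {p₁ : O → Λ₃ → Λ₁ → ℝ} {p₂ : O → Λ₁ → Λ₂ → ℝ} {pM : β → Λ₂ → Λ₃ → ℝ}
    (m₁ : ∀ a, Measurable fun q : Λ₃ × Λ₁ => p₁ a q.1 q.2)
    (m₂ : ∀ a, Measurable fun q : Λ₁ × Λ₂ => p₂ a q.1 q.2)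
    (mM : ∀ b, Measurable fun q : Λ₂ × Λ₃ => pM b q.1 q.2)
    (h₁ : ∀ x y, (∀ a, 0 ≤ p₁ a x y) ∧ ∑ a, p₁ a x y = 1)
    (h₂ : ∀ x y, (∀ a, 0 ≤ p₂ a x y) ∧ ∑ a, p₂ a x y = 1)
    (hM : ∀ x y, (∀ b, 0 ≤ pM b x y) ∧ ∑ b, pM b x y = 1)
    {P : O × O × β → ℝ}
    (hP : ∀ j, P j = ∫ x₁, ∫ x₂, ∫ x₃, p₁ j.1 x₃ x₁ * p₂ j.2.1 x₁ x₂ * pM j.2.2 x₂ x₃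
      ∂μ₃ ∂μ₂ ∂μ₁)
    {d : O → ℝ} {D : β → ℝ} (hsupp : ∀ j, P j ≠ 0 → d j.1 + d j.2.1 + D j.2.2 = 0)
    (hmom : ∀ φ : ℝ → ℝ → ℝ, ∑ j, φ (d j.1) (d j.2.1) * P j =
      (2 * φ 0 0 + φ 0 1 + φ 0 (-1) + φ 1 0 + φ (-1) 0 + φ 1 (-1) + φ (-1) 1) / 8)
    (α : O → ℝ) (γ : β → ℝ) :
    (∑ j, (if d j.1 = 0 ∧ d j.2.1 = -1 then α j.1 else 0) * P j)
      + (∑ j, (if d j.1 = 1 ∧ d j.2.1 = 0 then α j.2.1 else 0) * P j)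
      + (∑ j, (if d j.1 = -1 ∧ d j.2.1 = 1 then γ j.2.2 else 0) * P j)
    ≤ ∑ j, (if d j.1 = 0 ∧ d j.2.1 = 0 then max (α j.1 + α j.2.1 + γ j.2.2) 0 else 0) * P j := by
  set μ := μ₁.prod (μ₂.prod μ₃) with hμ
  have b₁ (a) : BddMeas fun q : Λ₃ × Λ₁ => p₁ a q.1 q.2 := ⟨m₁ a, 1, fun q => abs_le_one_of_sum_eq_one (h₁ _ _) a⟩
  have b₂ (a) : BddMeas fun q : Λ₁ × Λ₂ => p₂ a q.1 q.2 := ⟨m₂ a, 1, fun q => abs_le_one_of_sum_eq_one (h₂ _ _) a⟩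
  have bM (b) : BddMeas fun q : Λ₂ × Λ₃ => pM b q.1 q.2 := ⟨mM b, 1, fun q => abs_le_one_of_sum_eq_one (hM _ _) b⟩
  let w : O × O × β → Λ₁ × Λ₂ × Λ₃ → ℝ := fun j ω =>
    p₁ j.1 ω.2.2 ω.1 * p₂ j.2.1 ω.1 ω.2.1 * pM j.2.2 ω.2.1 ω.2.2
  have bw (j) : BddMeas (w j) :=
    (((b₁ j.1).comp (φ := fun ω : Λ₁ × Λ₂ × Λ₃ => (ω.2.2, ω.1)) (by fun_prop)).mul
      ((b₂ j.2.1).comp (φ := fun ω : Λ₁ × Λ₂ × Λ₃ => (ω.1, ω.2.1)) (by fun_prop))).mul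
      ((bM j.2.2).comp (φ := fun ω : Λ₁ × Λ₂ × Λ₃ => (ω.2.1, ω.2.2)) (by fun_prop))
  have w0 (j ω) : 0 ≤ w j ω :=
    mul_nonneg (mul_nonneg ((h₁ _ _).1 _) ((h₂ _ _).1 _)) ((hM _ _).1 _)
  have Pw (j) : P j = ∫ ω, w j ω ∂μ := by rw [hP, integral_triple _ _ _ (bw j)]
  have sumP (c : O × O × β → ℝ) : ∫ ω, ∑ j, c j * w j ω ∂μ = ∑ j, c j * P j := by
    rw [integral_finsetSum _ fun j _ => ((BddMeas.const (c j)).mul (bw j)).integrable μ]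
    simp only [integral_const_mul, Pw]
  -- factorised sums of the weights
  have fac (f : O → ℝ) (g : O → ℝ) (h : β → ℝ) (ω) : ∑ j, f j.1 * g j.2.1 * h j.2.2 * w j ω
      = (∑ a, f a * p₁ a ω.2.2 ω.1) * (∑ a, g a * p₂ a ω.1 ω.2.1)
        * ∑ b, h b * pM b ω.2.1 ω.2.2 := by
    simp only [Fintype.sum_prod_type, w]
    rw [Finset.sum_mul_sum, Finset.sum_mul]
    refine Finset.sum_congr rfl fun a _ => ?_
    rw [Finset.sum_mul]
    refine Finset.sum_congr rfl fun a' _ => ?_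
    rw [Finset.mul_sum]
    refine Finset.sum_congr rfl fun b _ => ?_
    ring
  have sumw (ω) : ∑ j, w j ω = 1 := by
    simpa [(h₁ _ _).2, (h₂ _ _).2, (hM _ _).2] using fac 1 1 1 ω
  let X : Λ₃ × Λ₁ → ℝ := fun q => ∑ a, d a * p₁ a q.1 q.2
  let Y : Λ₁ × Λ₂ → ℝ := fun q => ∑ a, d a * p₂ a q.1 q.2
  let Z : Λ₂ × Λ₃ → ℝ := fun q => ∑ b, D b * pM b q.1 q.2
  have bX : BddMeas X := BddMeas.sum _ fun a => (BddMeas.const _).mul (b₁ a)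
  have bY : BddMeas Y := BddMeas.sum _ fun a => (BddMeas.const _).mul (b₂ a)
  have bZ : BddMeas Z := BddMeas.sum _ fun b => (BddMeas.const _).mul (bM b)
  have good : ∀ᵐ ω ∂μ, ∀ j, w j ω ≠ 0 → d j.1 + d j.2.1 + D j.2.2 = 0 := by
    rw [ae_all_iff]
    intro j
    by_cases hj : P j = 0
    · have := (integral_eq_zero_iff_of_nonneg (w0 j) ((bw j).integrable μ)).1 ((Pw j).symm.trans hj)
      filter_upwards [this] with ω hω hne
      exact absurd hω hne
    · exact Filter.Eventually.of_forall fun _ _ => hsupp j hj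
  have det : ∀ᵐ ω ∂μ, X (ω.2.2, ω.1) + Y (ω.1, ω.2.1) + Z (ω.2.1, ω.2.2) = 0 ∧
      ∀ j, w j ω ≠ 0 → d j.1 = X (ω.2.2, ω.1) ∧ d j.2.1 = Y (ω.1, ω.2.1) := by
    filter_upwards [good] with ω hω
    obtain ⟨a, ha⟩ := exists_ne_zero_of_sum_eq_one (h₁ ω.2.2 ω.1).2
    obtain ⟨a', ha'⟩ := exists_ne_zero_of_sum_eq_one (h₂ ω.1 ω.2.1).2
    obtain ⟨b, hb⟩ := exists_ne_zero_of_sum_eq_one (hM ω.2.1 ω.2.2).2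
    have key {i i' k} (hi : p₁ i ω.2.2 ω.1 ≠ 0) (hi' : p₂ i' ω.1 ω.2.1 ≠ 0)
        (hk : pM k ω.2.1 ω.2.2 ≠ 0) : d i + d i' + D k = 0 :=
      hω (i, i', k) (mul_ne_zero (mul_ne_zero hi hi') hk)
    have e₁ : X (ω.2.2, ω.1) = d a := sum_mul_eq_of_support (h₁ _ _).2 fun i hi => by
      linarith [key hi ha' hb, key ha ha' hb]
    have e₂ : Y (ω.1, ω.2.1) = d a' := sum_mul_eq_of_support (h₂ _ _).2 fun i hi => by
      linarith [key ha hi hb, key ha ha' hb]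
    have e₃ : Z (ω.2.1, ω.2.2) = D b := sum_mul_eq_of_support (hM _ _).2 fun i hi => by
      linarith [key ha ha' hi, key ha ha' hb]
    refine ⟨by rw [e₁, e₂, e₃, key ha ha' hb], fun j hj => ?_⟩
    have hj₁ : p₁ j.1 ω.2.2 ω.1 ≠ 0 := left_ne_zero_of_mul (left_ne_zero_of_mul hj)
    have hj₂ : p₂ j.2.1 ω.1 ω.2.1 ≠ 0 := right_ne_zero_of_mul (left_ne_zero_of_mul hj)
    rw [e₁, e₂]
    constructor
    · linarith [key hj₁ ha' hb, key ha ha' hb]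
    · linarith [key ha hj₂ hb, key ha ha' hb]
  have mom (φ : ℝ → ℝ → ℝ) : ∫ ω, φ (X (ω.2.2, ω.1)) (Y (ω.1, ω.2.1)) ∂μ =
      (2 * φ 0 0 + φ 0 1 + φ 0 (-1) + φ 1 0 + φ (-1) 0 + φ 1 (-1) + φ (-1) 1) / 8 := by
    rw [← hmom, ← sumP]
    refine integral_congr_ae ?_
    filter_upwards [det] with ω hω
    exact (sum_mul_eq_of_support (sumw ω) fun j hj => by
      rw [(hω.2 j hj).1, (hω.2 j hj).2]).symm
  obtain ⟨t₁, t₂, t₃, bt₁, bt₂, bt₃, ht₁, ht₂, ht₃, tok⟩ := exists_tokens (μ₁ := μ₁) (μ₂ := μ₂)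
    (μ₃ := μ₃) bX bY bZ (det.mono fun _ h => h.1)
    ((mom fun x _ => x).trans (by norm_num)) ((mom fun _ y => y).trans (by norm_num))
    ((mom fun x _ => x ^ 2).trans (by norm_num)) ((mom fun _ y => y ^ 2).trans (by norm_num))
    ((mom fun x y => (x + y) ^ 2).trans (by norm_num))
    ((mom fun x _ => x ^ 4).trans (by norm_num)) ((mom fun _ y => y ^ 4).trans (by norm_num))
    ((mom fun x y => (x + y) ^ 4).trans (by norm_num))
  -- a token-dependent selection of outcomes
  have select (c c' : O × O × β → ℝ) (T : ℝ → ℝ → ℝ → ℝ)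
      (hT : ∀ x y z j, (x = 0 ∨ x = 1) → (y = 0 ∨ y = 1) → (z = 0 ∨ z = 1) →
        d j.1 = x - z → d j.2.1 = y - x → T x y z * c j = c' j) :
      ∀ᵐ ω ∂μ, T (t₁ ω.1) (t₂ ω.2.1) (t₃ ω.2.2) * ∑ j, c j * w j ω = ∑ j, c' j * w j ω := by
    filter_upwards [det, tok] with ω hω ⟨h1, h2, h3, hx, hy⟩
    rw [Finset.mul_sum]
    refine Finset.sum_congr rfl fun j _ => ?_
    by_cases hj : w j ω = 0
    · simp [hj]
    · rw [← mul_assoc, hT _ _ _ j h1 h2 h3 ((hω.2 j hj).1.trans hx) ((hω.2 j hj).2.trans hy)]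
  let A : Λ₃ × Λ₁ → ℝ := fun q => ∑ a, α a * p₁ a q.1 q.2
  let A' : Λ₁ × Λ₂ → ℝ := fun q => ∑ a, α a * p₂ a q.1 q.2
  let G : Λ₂ × Λ₃ → ℝ := fun q => ∑ b, γ b * pM b q.1 q.2
  have bA : BddMeas A := BddMeas.sum _ fun a => (BddMeas.const _).mul (b₁ a)
  have bA' : BddMeas A' := BddMeas.sum _ fun a => (BddMeas.const _).mul (b₂ a)
  have bG : BddMeas G := BddMeas.sum _ fun b => (BddMeas.const _).mul (bM b)
  have eA (ω) : A (ω.2.2, ω.1) = ∑ j, α j.1 * w j ω := by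
    simpa [(h₂ _ _).2, (hM _ _).2] using (fac α 1 1 ω).symm
  have eA' (ω) : A' (ω.1, ω.2.1) = ∑ j, α j.2.1 * w j ω := by
    simpa [(h₁ _ _).2, (hM _ _).2] using (fac 1 α 1 ω).symm
  have eG (ω) : G (ω.2.1, ω.2.2) = ∑ j, γ j.2.2 * w j ω := by
    simpa [(h₁ _ _).2, (h₂ _ _).2] using (fac 1 1 γ ω).symm
  have c₁ : BddMeas fun ω : Λ₁ × Λ₂ × Λ₃ => t₁ ω.1 := bt₁.comp (by fun_prop)
  have c₂ : BddMeas fun ω : Λ₁ × Λ₂ × Λ₃ => t₂ ω.2.1 := bt₂.comp (by fun_prop)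
  have c₃ : BddMeas fun ω : Λ₁ × Λ₂ × Λ₃ => t₃ ω.2.2 := bt₃.comp (by fun_prop)
  have cA : BddMeas fun ω : Λ₁ × Λ₂ × Λ₃ => A (ω.2.2, ω.1) := bA.comp (by fun_prop)
  have cA' : BddMeas fun ω : Λ₁ × Λ₂ × Λ₃ => A' (ω.1, ω.2.1) := bA'.comp (by fun_prop)
  have cG : BddMeas fun ω : Λ₁ × Λ₂ × Λ₃ => G (ω.2.1, ω.2.2) := bG.comp (by fun_prop)
  have c₁₂₃ : BddMeas fun ω : Λ₁ × Λ₂ × Λ₃ => t₁ ω.1 * t₂ ω.2.1 * t₃ ω.2.2 :=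
    (c₁.mul c₂).mul c₃
  have v₁ : ∫ ω, t₁ ω.1 * t₂ ω.2.1 * t₃ ω.2.2 * A (ω.2.2, ω.1) ∂μ
      = ∑ j, (if d j.1 = 0 ∧ d j.2.1 = -1 then α j.1 else 0) * P j := by
    rw [← sumP]
    trans ∫ ω, t₁ ω.1 * (1 - t₂ ω.2.1) * t₃ ω.2.2 * A (ω.2.2, ω.1) ∂μ
    · rw [integral_triple _ _ _ (c₁₂₃.mul cA), integral_triple _ _ _
        (((c₁.mul ((BddMeas.const 1).sub c₂)).mul c₃).mul cA)]
      simp only [mul_assoc, integral_const_mul, integral_mul_const, ht₂, integral_one_sub_eq_half bt₂ ht₂]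
    · refine integral_congr_ae ?_
      simp only [eA]
      refine select _ _ (fun x y z => x * (1 - y) * z) ?_
      rintro x y z j (rfl | rfl) (rfl | rfl) (rfl | rfl) e e' <;> rw [e, e'] <;> norm_num
  have v₂ : ∫ ω, t₁ ω.1 * t₂ ω.2.1 * t₃ ω.2.2 * A' (ω.1, ω.2.1) ∂μ
      = ∑ j, (if d j.1 = 1 ∧ d j.2.1 = 0 then α j.2.1 else 0) * P j := by
    rw [← sumP]
    trans ∫ ω, t₁ ω.1 * t₂ ω.2.1 * (1 - t₃ ω.2.2) * A' (ω.1, ω.2.1) ∂μ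
    · rw [integral_triple _ _ _ (c₁₂₃.mul cA'), integral_triple _ _ _
        (((c₁.mul c₂).mul ((BddMeas.const 1).sub c₃)).mul cA')]
      simp only [mul_assoc, integral_const_mul, integral_mul_const, ht₃, integral_one_sub_eq_half bt₃ ht₃]
    · refine integral_congr_ae ?_
      simp only [eA']
      refine select _ _ (fun x y z => x * y * (1 - z)) ?_
      rintro x y z j (rfl | rfl) (rfl | rfl) (rfl | rfl) e e' <;> rw [e, e'] <;> norm_num
  have v₃ : ∫ ω, t₁ ω.1 * t₂ ω.2.1 * t₃ ω.2.2 * G (ω.2.1, ω.2.2) ∂μ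
      = ∑ j, (if d j.1 = -1 ∧ d j.2.1 = 1 then γ j.2.2 else 0) * P j := by
    rw [← sumP]
    trans ∫ ω, (1 - t₁ ω.1) * t₂ ω.2.1 * t₃ ω.2.2 * G (ω.2.1, ω.2.2) ∂μ
    · rw [integral_triple _ _ _ (c₁₂₃.mul cG), integral_triple _ _ _
        (((((BddMeas.const 1).sub c₁).mul c₂).mul c₃).mul cG)]
      simp only [mul_assoc, integral_const_mul, integral_mul_const, ht₁, integral_one_sub_eq_half bt₁ ht₁]
    · refine integral_congr_ae ?_
      simp only [eG]
      refine select _ _ (fun x y z => (1 - x) * y * z) ?_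
      rintro x y z j (rfl | rfl) (rfl | rfl) (rfl | rfl) e e' <;> rw [e, e'] <;> norm_num
  rw [← v₁, ← v₂, ← v₃,
    ← integral_add ((c₁₂₃.mul cA).integrable _) ((c₁₂₃.mul cA').integrable _),
    ← integral_add (((c₁₂₃.mul cA).add (c₁₂₃.mul cA')).integrable _)
      ((c₁₂₃.mul cG).integrable _), ← sumP]
  refine integral_mono_ae
    ((((c₁₂₃.mul cA).add (c₁₂₃.mul cA')).add (c₁₂₃.mul cG)).integrable _)
    ((BddMeas.sum _ fun j => (BddMeas.const _).mul (bw j)).integrable _) ?_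
  filter_upwards [det, tok] with ω hω ⟨h1, h2, h3, hx, hy⟩
  rw [← mul_add, ← mul_add, eA, eA', eG, ← Finset.sum_add_distrib, ← Finset.sum_add_distrib,
    Finset.mul_sum]
  refine Finset.sum_le_sum fun j _ => ?_
  rw [← add_mul, ← add_mul, ← mul_assoc]
  by_cases hj : w j ω = 0
  · simp [hj]
  refine mul_le_mul_of_nonneg_right ?_ (w0 j ω)
  rw [(hω.2 j hj).1.trans hx, (hω.2 j hj).2.trans hy]
  rcases h1 with h1 | h1 <;> rcases h2 with h2 | h2 <;> rcases h3 with h3 | h3 <;>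
    rw [h1, h2, h3] <;> norm_num

end Triangle

section Ring

open Matrix

/-- The matrix by which an outcome propagates the token of one source of the ring to the next. -/
noncomputable def transfer (u : ℝ) : Outc → Matrix (Fin 2) (Fin 2) ℝ
  | Outc.zero => !![0, 1; 0, 0]
  | Outc.one i => !![uco u i, 0; 0, vco u i]
  | Outc.two => !![0, 0; 1, 0]

/-- The ordered product of the transfer matrices along a chain of parties. -/
noncomputable def chainMat (u : ℝ) {n : ℕ} (b : Fin n → Outc) : Matrix (Fin 2) (Fin 2) ℝ :=
  (List.ofFn fun k => transfer u (b k)).prod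

/-- The number of tokens of an outcome, minus one. -/
def excess : Outc → ℝ
  | Outc.zero => -1
  | Outc.one _ => 0
  | Outc.two => 1

lemma chainMat_cons (u : ℝ) {n : ℕ} (a : Outc) (b : Fin n → Outc) :
    chainMat u (Fin.cons a b : Fin (n + 1) → Outc) = transfer u a * chainMat u b := by
  simp [chainMat, List.ofFn_succ]

lemma chainMat_zero (u : ℝ) (b : Fin 0 → Outc) : chainMat u b = 1 := by
  simp [chainMat]

lemma sum_outc (f : Outc → ℝ) :
    ∑ a, f a = f Outc.zero + f (Outc.one 0) + f (Outc.one 1) + f Outc.two := by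
  have : (Finset.univ : Finset Outc) = {Outc.zero, Outc.one 0, Outc.one 1, Outc.two} := by
    decide
  rw [this, Finset.sum_insert (by decide), Finset.sum_insert (by decide),
    Finset.sum_insert (by decide), Finset.sum_singleton]
  ring

lemma sum_fin_succ_fun {α : Type*} [Fintype α] {n : ℕ} (f : (Fin (n + 1) → α) → ℝ) :
    ∑ b, f b = ∑ a, ∑ b : Fin n → α, f (Fin.cons a b) := by
  rw [← (Fin.consEquiv fun _ => α).sum_comp, Fintype.sum_prod_type]
  rfl

/-- A sum over paths is a product of matrices. -/
lemma sum_paths {ι : Type*} [Fintype ι] [DecidableEq ι] {m : ℕ} (M : Fin m → Matrix ι ι ℝ)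
    (g : ι → ι → ℝ) :
    ∑ L : Fin (m + 1) → ι, (∏ k : Fin m, M k (L k.castSucc) (L k.succ)) * g (L 0) (L (Fin.last m))
      = ∑ i, ∑ j, (List.ofFn M).prod i j * g i j := by
  induction m generalizing g with
  | zero =>
    rw [sum_fin_succ_fun]
    simp [Matrix.one_apply, Fin.last]
  | succ m ih =>
    rw [sum_fin_succ_fun]
    refine Finset.sum_congr rfl fun i _ => ?_
    have key := ih (fun k => M k.succ) (fun i' j => M 0 i i' * g i j)
    simp only [Fin.prod_univ_succ, Fin.castSucc_zero, Fin.cons_zero, Fin.cons_succ,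
      ← Fin.succ_castSucc, ← Fin.succ_last, List.ofFn_succ, List.prod_cons, Matrix.mul_apply,
      Finset.sum_mul]
    rw [Finset.sum_comm]
    calc _ = _ := Finset.sum_congr rfl fun L _ => by ring
      _ = _ := key
      _ = _ := Finset.sum_congr rfl fun i' _ => Finset.sum_congr rfl fun j _ => by ring

lemma sum_cycles {ι : Type*} [Fintype ι] [DecidableEq ι] {m : ℕ}
    (M : Fin (m + 1) → Matrix ι ι ℝ) :
    ∑ L : Fin (m + 1) → ι, ∏ k, M k (L k) (L (finNext k)) = (List.ofFn M).prod.trace := by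
  have hlast : finNext (Fin.last m) = 0 := by
    ext; simp [finNext]
  have hcast (k : Fin m) : finNext k.castSucc = k.succ := by
    ext; simp [finNext, Nat.mod_eq_of_lt]
  have := sum_paths (fun k : Fin m => M k.castSucc) (fun i j => M (Fin.last m) j i)
  simp only [Fin.prod_univ_castSucc, hlast, hcast]
  rw [this, List.ofFn_succ', List.prod_concat]
  simp [Matrix.trace, Matrix.mul_apply]

lemma ringP_eq (m : ℕ) (u : ℝ) (a : Fin (m + 1) → Outc) :
    ringP (m + 1) u a = (1 / 2) ^ (m + 1) * (chainMat u a).trace ^ 2 := by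
  have step (x : Outc) (l l' : Fin 2) :
      ∑ r, basisVec u x l r * psiPlus r l' = (Real.sqrt 2)⁻¹ * transfer u x l l' := by
    cases x <;> fin_cases l <;> fin_cases l' <;>
      simp [basisVec, psiPlus, transfer, mul_comm]
  have amp : ringAmp (m + 1) u a = (Real.sqrt 2)⁻¹ ^ (m + 1) * (chainMat u a).trace := by
    have h1 (L : Fin (m + 1) → Fin 2) : ∑ R : Fin (m + 1) → Fin 2,
        (∏ k, basisVec u (a k) (L k) (R k)) * ∏ k, psiPlus (R k) (L (finNext k))
        = (Real.sqrt 2)⁻¹ ^ (m + 1) * ∏ k, transfer u (a k) (L k) (L (finNext k)) := by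
      simp only [← Finset.prod_mul_distrib]
      have := Finset.prod_univ_sum (fun _ : Fin (m + 1) => (Finset.univ : Finset (Fin 2)))
        (fun k r => basisVec u (a k) (L k) r * psiPlus r (L (finNext k)))
      rw [Fintype.piFinset_univ] at this
      rw [← this]
      simp only [step, Finset.prod_mul_distrib]
      simp
    simp only [ringAmp, h1, ← Finset.mul_sum]
    rw [sum_cycles fun k => transfer u (a k)]
    rfl
  rw [ringP, amp, mul_pow, ← pow_mul, mul_comm (m + 1) 2, pow_mul, inv_pow,
    Real.sq_sqrt (by norm_num)]
  norm_num

/-- Sum of the squares of the entries. -/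
def frob (C : Matrix (Fin 2) (Fin 2) ℝ) : ℝ := C 0 0 ^ 2 + C 0 1 ^ 2 + C 1 0 ^ 2 + C 1 1 ^ 2

variable {u : ℝ}

lemma sum_trace_transfer_sq (hu : u ^ 2 + √(1 - u ^ 2) ^ 2 = 1) (C : Matrix (Fin 2) (Fin 2) ℝ) :
    ∑ a, (transfer u a * C).trace ^ 2 = frob C := by
  simp only [sum_outc, transfer, Matrix.trace_fin_two, Matrix.mul_apply, Fin.sum_univ_two,
    frob, uco, vco]
  simp
  linear_combination (C 0 0 ^ 2 + C 1 1 ^ 2) * hu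

lemma sum_frob_transfer (hu : u ^ 2 + √(1 - u ^ 2) ^ 2 = 1) (C : Matrix (Fin 2) (Fin 2) ℝ) :
    ∑ a, frob (transfer u a * C) = 2 * frob C := by
  simp only [sum_outc, transfer, Matrix.mul_apply, Fin.sum_univ_two, frob, uco, vco]
  simp
  linear_combination (C 0 0 ^ 2 + C 1 1 ^ 2 + C 0 1 ^ 2 + C 1 0 ^ 2) * hu

lemma sum_frob_chainMat (hu : u ^ 2 + √(1 - u ^ 2) ^ 2 = 1) (n : ℕ)
    (C : Matrix (Fin 2) (Fin 2) ℝ) :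
    ∑ b : Fin n → Outc, frob (chainMat u b * C) = 2 ^ n * frob C := by
  induction n with
  | zero => simp [chainMat_zero]
  | succ n ih =>
    rw [sum_fin_succ_fun, Finset.sum_comm]
    simp only [chainMat_cons, Matrix.mul_assoc, sum_frob_transfer hu, ← Finset.mul_sum, ih]
    ring

lemma sum_trace_chainMat_sq (hu : u ^ 2 + √(1 - u ^ 2) ^ 2 = 1) (n : ℕ)
    (C : Matrix (Fin 2) (Fin 2) ℝ) :
    ∑ b : Fin (n + 1) → Outc, (C * chainMat u b).trace ^ 2 = 2 ^ n * frob C := by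
  rw [sum_fin_succ_fun, Finset.sum_comm]
  simp only [Matrix.trace_mul_comm C, chainMat_cons, Matrix.mul_assoc, sum_trace_transfer_sq hu,
    sum_frob_chainMat hu]

lemma sum_excess_of_chainMat_ne_zero {n : ℕ} (b : Fin n → Outc) (i j : Fin 2)
    (h : chainMat u b i j ≠ 0) : ∑ k, excess (b k) = (i : ℝ) - (j : ℝ) := by
  induction n generalizing i with
  | zero =>
    rw [chainMat_zero, Matrix.one_apply] at h
    simp_all
  | succ n ih =>
    obtain ⟨a, b, rfl⟩ : ∃ a b', b = Fin.cons a b' := ⟨b 0, Fin.tail b, by simp⟩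
    rw [chainMat_cons, Matrix.mul_apply, Fin.sum_univ_two] at h
    rw [Fin.sum_univ_succ]
    simp only [Fin.cons_zero, Fin.cons_succ]
    cases a <;> fin_cases i <;> simp [transfer] at h
    · rw [ih b 1 h]; simp [excess]; ring
    · rw [ih b 0 h.2]; simp [excess]
    · rw [ih b 1 h.2]; simp [excess]
    · rw [ih b 0 h]; simp [excess]; ring

lemma sum_excess_of_ringP_ne_zero (m : ℕ) (a : Fin (m + 1) → Outc) (h : ringP (m + 1) u a ≠ 0) :
    ∑ k, excess (a k) = 0 := by
  rw [ringP_eq, Matrix.trace_fin_two] at h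
  have hdiag : chainMat u a 0 0 ≠ 0 ∨ chainMat u a 1 1 ≠ 0 := by
    by_contra! h0
    simp [h0.1, h0.2] at h
  rcases hdiag with hdiag | hdiag
  · simpa using sum_excess_of_chainMat_ne_zero a _ _ hdiag
  · simpa using sum_excess_of_chainMat_ne_zero a _ _ hdiag

/-- The diagonal of a chain: either one of the two entries vanishes, or all the outcomes are
single-token ones. -/
lemma chainMat_diag_cases (u : ℝ) {p : ℕ} (b : Fin p → Outc) :
    chainMat u b 0 0 = 0 ∨ chainMat u b 1 1 = 0 ∨
      ∃ r s, r + s = p ∧ chainMat u b 0 0 = u ^ r * √(1 - u ^ 2) ^ s ∧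
        chainMat u b 1 1 = (-1) ^ s * √(1 - u ^ 2) ^ r * u ^ s := by
  induction p with
  | zero => exact Or.inr (Or.inr ⟨0, 0, rfl, by simp [chainMat_zero], by simp [chainMat_zero]⟩)
  | succ p ih =>
    obtain ⟨a, b, rfl⟩ : ∃ a b', b = Fin.cons a b' := ⟨b 0, Fin.tail b, by simp⟩
    simp only [chainMat_cons, Matrix.mul_apply, Fin.sum_univ_two]
    rcases a with _ | i | _
    · right; left; simp [transfer]
    · rcases ih b with h | h | ⟨r, s, h, h0, h1⟩
      · left; simp [transfer, h]
      · right; left; simp [transfer, h]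
      · right; right
        fin_cases i
        · refine ⟨r + 1, s, by omega, ?_, ?_⟩
          · simp [transfer, h0, uco]; ring
          · simp [transfer, h1, vco]; ring
        · refine ⟨r, s + 1, by omega, ?_, ?_⟩
          · simp [transfer, h0, uco]; ring
          · simp [transfer, h1, vco]; ring
    · left; simp [transfer]

lemma exists_chainMat_diag (u : ℝ) {p r s : ℕ} (h : r + s = p) : ∃ b : Fin p → Outc,
    chainMat u b 0 0 = u ^ r * √(1 - u ^ 2) ^ s ∧
      chainMat u b 1 1 = (-1) ^ s * √(1 - u ^ 2) ^ r * u ^ s := by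
  induction p generalizing r s with
  | zero =>
    obtain ⟨rfl, rfl⟩ : r = 0 ∧ s = 0 := by omega
    exact ⟨Fin.elim0, by simp [chainMat_zero], by simp [chainMat_zero]⟩
  | succ p ih =>
    rcases r with _ | r
    · rcases s with _ | s
      · omega
      obtain ⟨b, h0, h1⟩ := ih (r := 0) (s := s) (by omega)
      refine ⟨Fin.cons (Outc.one 1) b, ?_, ?_⟩
      · simp [chainMat_cons, Matrix.mul_apply, transfer, h0, uco]; ring
      · simp [chainMat_cons, Matrix.mul_apply, transfer, h1, vco]; ring
    · obtain ⟨b, h0, h1⟩ := ih (r := r) (s := s) (by omega)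
      refine ⟨Fin.cons (Outc.one 0) b, ?_, ?_⟩
      · simp [chainMat_cons, Matrix.mul_apply, transfer, h0, uco]; ring
      · simp [chainMat_cons, Matrix.mul_apply, transfer, h1, vco]; ring

/-- The gap of the token inequality at a merged outcome with diagonal entries `A`, `B`, for the
weight `g` given to this outcome. -/
def gap (u v g A B : ℝ) : ℝ :=
  (2 * (u ^ 2 - v ^ 2) + g) * A ^ 2 - (max (2 + g) 0 * (u ^ 2 * A + v ^ 2 * B) ^ 2
    + 2 * (max g 0 * (u * v * (A - B)) ^ 2) + max (g - 2) 0 * (v ^ 2 * A + u ^ 2 * B) ^ 2)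

lemma gap_two {u v : ℝ} (h : u ^ 2 + v ^ 2 = 1) (A B : ℝ) :
    gap u v 2 A B = -4 * v ^ 2 * B ^ 2 := by
  have hv : v ^ 2 = 1 - u ^ 2 := by linarith
  norm_num [gap, mul_pow, hv]
  ring

lemma gap_neg_two {u v : ℝ} (h : u ^ 2 + v ^ 2 = 1) (A B : ℝ) :
    gap u v (-2) A B = -4 * v ^ 2 * A ^ 2 := by
  have hv : v ^ 2 = 1 - u ^ 2 := by linarith
  norm_num [gap, mul_pow, hv]
  ring

lemma gap_zero {u v : ℝ} (h : u ^ 2 + v ^ 2 = 1) (A B : ℝ) :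
    gap u v 0 A B = -2 * (v ^ 2 * A) ^ 2 - 4 * u ^ 2 * v ^ 2 * (A * B) - 2 * (v ^ 2 * B) ^ 2 := by
  have hv : v ^ 2 = 1 - u ^ 2 := by linarith
  norm_num [gap, mul_pow, hv]
  ring

lemma pow_mul_pow_sq_le {u v : ℝ} (hu : 0 ≤ u) (hu1 : u ≤ 1) (hv : 0 ≤ v) (hv1 : v ≤ 1)
    (i j k l : ℕ) (h : l ≤ k + 2 * j) : v ^ k * (u ^ i * v ^ j) ^ 2 ≤ v ^ l := by
  have h1 : (u ^ i) ^ 2 ≤ 1 := pow_le_one₀ (pow_nonneg hu i) (pow_le_one₀ hu hu1)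
  calc v ^ k * (u ^ i * v ^ j) ^ 2 = (u ^ i) ^ 2 * v ^ (k + 2 * j) := by ring
    _ ≤ 1 * v ^ (k + 2 * j) := mul_le_mul_of_nonneg_right h1 (pow_nonneg hv _)
    _ ≤ v ^ l := by rw [one_mul]; exact pow_le_pow_of_le_one hv hv1 h

/-- The diagonal entries of a chain of single-token outcomes, for which the gap has a positive
leading term. -/
lemma le_gap_zero {u v : ℝ} (hu : 0 ≤ u) (hu1 : u ≤ 1) (hv : 0 ≤ v) (hv1 : v ≤ 1)
    (h : u ^ 2 + v ^ 2 = 1) {p r s : ℕ} (hrs : r + s = p) (hs : Odd s)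
    (h1 : 2 * s < p + 2) (h2 : p + 2 < 2 * s + 4) :
    4 * (u * v) ^ (p + 2) - 4 * v ^ (p + 3)
      ≤ gap u v 0 (u ^ r * v ^ s) ((-1) ^ s * v ^ r * u ^ s) := by
  have e1 := pow_mul_pow_sq_le hu hu1 hv hv1 r s 4 (p + 3) (by omega)
  have e2 := pow_mul_pow_sq_le hu hu1 hv hv1 s r 4 (p + 3) (by omega)
  rw [gap_zero h, hs.neg_one_pow, ← hrs]
  rw [← hrs] at e1 e2
  have e3 : u ^ 2 * v ^ 2 * (u ^ r * v ^ s * (-1 * v ^ r * u ^ s)) = -(u * v) ^ (r + s + 2) := by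
    ring
  have e4 : (v ^ 2 * (u ^ r * v ^ s)) ^ 2 = v ^ 4 * (u ^ r * v ^ s) ^ 2 := by ring
  have e5 : (v ^ 2 * (-1 * v ^ r * u ^ s)) ^ 2 = v ^ 4 * (u ^ s * v ^ r) ^ 2 := by ring
  rw [e4, e5]
  linarith

lemma exists_le_gap {u : ℝ} (hu : 0 ≤ u) (hu1 : u ≤ 1) {p t : ℕ} (ht : Odd t)
    (h1 : 2 * t < p + 2) (h2 : p + 2 < 2 * t + 4) (b : Fin p → Outc) :
    ∃ g, -4 * √(1 - u ^ 2) ^ (p + 3)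
      ≤ gap u (√(1 - u ^ 2)) g (chainMat u b 0 0) (chainMat u b 1 1) := by
  have hsq : √(1 - u ^ 2) ^ 2 = 1 - u ^ 2 := Real.sq_sqrt (by nlinarith)
  have hv : 0 ≤ √(1 - u ^ 2) := Real.sqrt_nonneg _
  have hv1 : √(1 - u ^ 2) ≤ 1 := Real.sqrt_le_one.2 (by nlinarith [sq_nonneg u])
  generalize hvv : √(1 - u ^ 2) = v at *
  have h : u ^ 2 + v ^ 2 = 1 := by linarith
  have hneg : -4 * v ^ (p + 3) ≤ 0 := by linarith [pow_nonneg hv (p + 3)]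
  have hd := chainMat_diag_cases u b
  rw [hvv] at hd
  rcases hd with h0 | h0 | ⟨r, s, hrs, hA, hB⟩
  · exact ⟨-2, by rw [gap_neg_two h, h0]; simpa using hneg⟩
  · exact ⟨2, by rw [gap_two h, h0]; simpa using hneg⟩
  · rw [hA, hB]
    rcases lt_trichotomy s t with hst | rfl | hst
    · have e := pow_mul_pow_sq_le hu hu1 hv hv1 s r 2 (p + 3) (by omega)
      have hsgn : ((-1 : ℝ) ^ s) ^ 2 = 1 := by rw [← pow_mul, mul_comm, pow_mul]; simp
      have e' : ((-1) ^ s * v ^ r * u ^ s) ^ 2 = (u ^ s * v ^ r) ^ 2 := by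
        linear_combination (u ^ s * v ^ r) ^ 2 * hsgn
      exact ⟨2, by rw [gap_two h, e']; linarith⟩
    · refine ⟨0, le_trans ?_ (le_gap_zero hu hu1 hv hv1 h hrs ht h1 h2)⟩
      linarith [pow_nonneg (mul_nonneg hu hv) (p + 2)]
    · have e := pow_mul_pow_sq_le hu hu1 hv hv1 r s 2 (p + 3) (by omega)
      exact ⟨-2, by rw [gap_neg_two h]; linarith⟩

/-- Close to `u = 1` the gaps can be made to have a positive sum. -/
lemma exists_sum_gap_pos {u : ℝ} (hu : 0 ≤ u) (hu1 : u < 1) {p t : ℕ} (ht : Odd t)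
    (h1 : 2 * t < p + 2) (h2 : p + 2 < 2 * t + 4) (htp : t ≤ p)
    (hlarge : Fintype.card (Fin p → Outc) * √(1 - u ^ 2) < u ^ (p + 2)) :
    ∃ γ : (Fin p → Outc) → ℝ,
      0 < ∑ b, gap u (√(1 - u ^ 2)) (γ b) (chainMat u b 0 0) (chainMat u b 1 1) := by
  classical
  have hsq : √(1 - u ^ 2) ^ 2 = 1 - u ^ 2 := Real.sq_sqrt (by nlinarith)
  have hv : 0 < √(1 - u ^ 2) := Real.sqrt_pos.2 (by nlinarith)
  have hv1 : √(1 - u ^ 2) ≤ 1 := Real.sqrt_le_one.2 (by nlinarith [sq_nonneg u])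
  obtain ⟨b₀, hA, hB⟩ := exists_chainMat_diag u (Nat.sub_add_cancel htp)
  choose γ hγ using exists_le_gap hu hu1.le ht h1 h2
  refine ⟨Function.update γ b₀ 0, ?_⟩
  have hle : ∑ b : Fin p → Outc, ((if b = b₀ then 4 * (u * √(1 - u ^ 2)) ^ (p + 2) else 0)
      + -4 * √(1 - u ^ 2) ^ (p + 3)) ≤ ∑ b, gap u (√(1 - u ^ 2)) (Function.update γ b₀ 0 b)
        (chainMat u b 0 0) (chainMat u b 1 1) := by
    refine Finset.sum_le_sum fun b _ => ?_
    by_cases hb : b = b₀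
    · subst hb
      rw [Function.update_self, hA, hB, if_pos rfl]
      have := le_gap_zero hu hu1.le hv.le hv1 (by linarith) (Nat.sub_add_cancel htp) ht h1 h2
      linarith
    · rw [Function.update_of_ne hb, if_neg hb, zero_add]
      exact hγ b
  refine lt_of_lt_of_le ?_ hle
  rw [Finset.sum_add_distrib, Finset.sum_ite_eq' Finset.univ b₀, if_pos (Finset.mem_univ _),
    Finset.sum_const, Finset.card_univ, nsmul_eq_mul]
  have := mul_lt_mul_of_pos_right hlarge (pow_pos hv (p + 2))
  rw [mul_pow, pow_succ _ (p + 2)]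
  linarith

lemma ringP_cons_cons (n : ℕ) (u : ℝ) (a a' : Outc) (b : Fin (n + 1) → Outc) :
    ringP (n + 3) u (Fin.cons a (Fin.cons a' b : Fin (n + 2) → Outc) : Fin (n + 3) → Outc) =
      (1 / 2) ^ (n + 3) * (transfer u a * transfer u a' * chainMat u b).trace ^ 2 := by
  rw [ringP_eq, chainMat_cons, chainMat_cons, Matrix.mul_assoc]

/-- The ring distribution seen by the first two parties and the merged party. -/
noncomputable def mergedP (n : ℕ) (u : ℝ) (j : Outc × Outc × (Fin (n + 1) → Outc)) : ℝ :=
  ringP (n + 3) u (Fin.cons j.1 (Fin.cons j.2.1 j.2.2 : Fin (n + 2) → Outc) : Fin (n + 3) → Outc)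

lemma sum_mergedP (n : ℕ) (hu : u ^ 2 + √(1 - u ^ 2) ^ 2 = 1) (c : Outc → Outc → ℝ) :
    ∑ j, c j.1 j.2.1 * mergedP n u j
      = (∑ a, ∑ a', c a a' * frob (transfer u a * transfer u a')) / 8 := by
  rw [Fintype.sum_prod_type, Finset.sum_div]
  refine Finset.sum_congr rfl fun a _ => ?_
  rw [Fintype.sum_prod_type, Finset.sum_div]
  refine Finset.sum_congr rfl fun a' _ => ?_
  simp only [mergedP, ringP_cons_cons]
  rw [← Finset.mul_sum, ← Finset.mul_sum, sum_trace_chainMat_sq hu]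
  have : (1 / 2 : ℝ) ^ (n + 3) * 2 ^ n = 1 / 8 := by
    rw [pow_add, mul_right_comm, ← mul_pow]
    norm_num
  linear_combination c a a' * frob (transfer u a * transfer u a') * this

lemma sum_mergedP_excess (n : ℕ) (hu : u ^ 2 + √(1 - u ^ 2) ^ 2 = 1) (φ : ℝ → ℝ → ℝ) :
    ∑ j, φ (excess j.1) (excess j.2.1) * mergedP n u j =
      (2 * φ 0 0 + φ 0 1 + φ 0 (-1) + φ 1 0 + φ (-1) 0 + φ 1 (-1) + φ (-1) 1) / 8 := by
  rw [sum_mergedP n hu fun a a' => φ (excess a) (excess a')]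
  simp only [sum_outc, excess, frob, transfer, uco, vco, Matrix.mul_apply, Fin.sum_univ_two]
  simp
  linear_combination (φ 0 0 * (u ^ 2 + √(1 - u ^ 2) ^ 2 + 1) * 2
    + φ 0 1 + φ 0 (-1) + φ 1 0 + φ (-1) 0) * hu

/-- The sign distinguishing the two single-token outcomes. -/
def oneSign : Outc → ℝ
  | Outc.one i => if i = 0 then 1 else -1
  | _ => 0

/-- The two sides of the token inequality differ by the sum of the gaps. -/
lemma token_inequality_gap (n : ℕ) (hu : u ^ 2 + √(1 - u ^ 2) ^ 2 = 1)
    (γ : (Fin (n + 1) → Outc) → ℝ) :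
    (∑ j, (if excess j.1 = 0 ∧ excess j.2.1 = -1 then oneSign j.1 else 0) * mergedP n u j)
      + (∑ j, (if excess j.1 = 1 ∧ excess j.2.1 = 0 then oneSign j.2.1 else 0) * mergedP n u j)
      + (∑ j, (if excess j.1 = -1 ∧ excess j.2.1 = 1 then γ j.2.2 else 0) * mergedP n u j)
      - ∑ j, (if excess j.1 = 0 ∧ excess j.2.1 = 0 then
          max (oneSign j.1 + oneSign j.2.1 + γ j.2.2) 0 else 0) * mergedP n u j
    = (1 / 2) ^ (n + 3) * ∑ b, gap u (√(1 - u ^ 2)) (γ b) (chainMat u b 0 0)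
        (chainMat u b 1 1) := by
  have s₁ : ∑ j, (if excess j.1 = 0 ∧ excess j.2.1 = -1 then oneSign j.1 else 0) * mergedP n u j
      = (u ^ 2 - √(1 - u ^ 2) ^ 2) / 8 := by
    rw [sum_mergedP n hu fun a a' => if excess a = 0 ∧ excess a' = -1 then oneSign a else 0]
    simp only [sum_outc, excess, oneSign, frob, transfer, uco, vco, Matrix.mul_apply,
      Fin.sum_univ_two]
    norm_num
    ring
  have s₂ : ∑ j, (if excess j.1 = 1 ∧ excess j.2.1 = 0 then oneSign j.2.1 else 0) * mergedP n u j
      = (u ^ 2 - √(1 - u ^ 2) ^ 2) / 8 := by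
    rw [sum_mergedP n hu fun a a' => if excess a = 1 ∧ excess a' = 0 then oneSign a' else 0]
    simp only [sum_outc, excess, oneSign, frob, transfer, uco, vco, Matrix.mul_apply,
      Fin.sum_univ_two]
    norm_num
    ring
  have s₀ : ∑ b : Fin (n + 1) → Outc, chainMat u b 0 0 ^ 2 = 2 ^ n := by
    have := sum_trace_chainMat_sq hu n !![1, 0; 0, 0]
    simp only [Matrix.trace_fin_two, Matrix.mul_apply, Fin.sum_univ_two, frob] at this
    simpa using this
  have hpow : (1 / 2 : ℝ) ^ (n + 3) * 2 ^ n = 1 / 8 := by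
    rw [pow_add, mul_right_comm, ← mul_pow]
    norm_num
  have swap (F : Outc → Outc → (Fin (n + 1) → Outc) → ℝ) :
      ∑ j : Outc × Outc × (Fin (n + 1) → Outc), F j.1 j.2.1 j.2.2
        = ∑ b, ∑ a, ∑ a', F a a' b := by
    simp only [Fintype.sum_prod_type]
    rw [Finset.sum_comm (s := (Finset.univ : Finset (Fin (n + 1) → Outc)))]
    exact Finset.sum_congr rfl fun a _ => Finset.sum_comm
  have s₃ : ∑ j, (if excess j.1 = -1 ∧ excess j.2.1 = 1 then γ j.2.2 else 0) * mergedP n u j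
      = (1 / 2) ^ (n + 3) * ∑ b, γ b * chainMat u b 0 0 ^ 2 := by
    simp only [mergedP, ringP_cons_cons]
    rw [swap fun a a' b => (if excess a = -1 ∧ excess a' = 1 then γ b else 0)
      * ((1 / 2) ^ (n + 3) * (transfer u a * transfer u a' * chainMat u b).trace ^ 2),
      Finset.mul_sum]
    refine Finset.sum_congr rfl fun b _ => ?_
    simp only [sum_outc, excess, transfer, Matrix.trace_fin_two, Matrix.mul_apply,
      Fin.sum_univ_two]
    norm_num
    ring
  have s₄ : ∑ j, (if excess j.1 = 0 ∧ excess j.2.1 = 0 then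
        max (oneSign j.1 + oneSign j.2.1 + γ j.2.2) 0 else 0) * mergedP n u j
      = (1 / 2) ^ (n + 3) * ∑ b, ((2 * (u ^ 2 - √(1 - u ^ 2) ^ 2) + γ b) * chainMat u b 0 0 ^ 2
        - gap u (√(1 - u ^ 2)) (γ b) (chainMat u b 0 0) (chainMat u b 1 1)) := by
    simp only [mergedP, ringP_cons_cons]
    rw [swap fun a a' b => (if excess a = 0 ∧ excess a' = 0 then
        max (oneSign a + oneSign a' + γ b) 0 else 0)
      * ((1 / 2) ^ (n + 3) * (transfer u a * transfer u a' * chainMat u b).trace ^ 2),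
      Finset.mul_sum]
    refine Finset.sum_congr rfl fun b _ => ?_
    simp only [sum_outc, excess, oneSign, transfer, uco, vco, Matrix.trace_fin_two,
      Matrix.mul_apply, Fin.sum_univ_two, gap]
    norm_num
    ring_nf
  rw [s₁, s₂, s₃, s₄, Finset.sum_sub_distrib]
  simp only [add_mul, Finset.sum_add_distrib, ← Finset.mul_sum, s₀]
  linear_combination -2 * (u ^ 2 - √(1 - u ^ 2) ^ 2) * hpow

end Ring

lemma exists_odd_half (N : ℕ) (hN : 3 ≤ N) (hpar : N % 2 = 1 ∨ 4 ∣ N) :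
    ∃ t, Odd t ∧ 2 * t < N ∧ N < 2 * t + 4 ∧ t + 2 ≤ N := by
  have h : N % 4 = 0 ∨ N % 4 = 1 ∨ N % 4 = 3 := by omega
  rcases h with h | h | h
  · exact ⟨N / 2 - 1, Nat.odd_iff.2 (by omega), by omega, by omega, by omega⟩
  · exact ⟨N / 2 - 1, Nat.odd_iff.2 (by omega), by omega, by omega, by omega⟩
  · exact ⟨N / 2, Nat.odd_iff.2 (by omega), by omega, by omega, by omega⟩

lemma exists_near_one (K : ℝ) (q : ℕ) :
    ∃ ε > (0 : ℝ), ∀ u : ℝ, 1 - ε < u → u < 1 → 0 ≤ u ∧ K * √(1 - u ^ 2) < u ^ q := by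
  have hc : Continuous fun u : ℝ => u ^ q - K * √(1 - u ^ 2) := by fun_prop
  have h1 : (0 : ℝ) < (fun u : ℝ => u ^ q - K * √(1 - u ^ 2)) 1 := by simp
  obtain ⟨δ, hδ, h⟩ := Metric.eventually_nhds_iff.1 (hc.continuousAt.eventually_const_lt h1)
  refine ⟨min δ 1, lt_min hδ one_pos, fun u hu hu1 => ⟨?_, ?_⟩⟩
  · linarith [min_le_right δ 1]
  · have := h (y := u) (by
      rw [Real.dist_eq, abs_sub_comm, abs_of_pos (by linarith)]
      linarith [min_le_left δ 1])
    simpa using this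

/-- for every `N ≥ 3` that is odd or divisible by `4`, there is `ε > 0`
such that for all `u` with `1 - ε < u < 1` the `N`-party ring distribution is
nonlocal on the triangle network obtained by merging `A₃,…,A_N` into one party `M`
(sources: `λ₁` between `A₁,A₂`, `λ₂` between `A₂,M`, `λ₃` between `M,A₁`).
Parties are `0`-indexed: `A_j = a (j-1)`. -/
theorem stmt_16 (N : ℕ) (hN : 3 ≤ N) (hpar : N % 2 = 1 ∨ 4 ∣ N) :
    ∃ ε > (0 : ℝ), ∀ u : ℝ, 1 - ε < u → u < 1 →
      ¬ ∃ (Λ₁ Λ₂ Λ₃ : Type)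
          (m₁ : MeasurableSpace Λ₁) (m₂ : MeasurableSpace Λ₂) (m₃ : MeasurableSpace Λ₃)
          (μ₁ : @Measure Λ₁ m₁) (μ₂ : @Measure Λ₂ m₂) (μ₃ : @Measure Λ₃ m₃)
          (p₁ : Outc → Λ₃ → Λ₁ → ℝ) (p₂ : Outc → Λ₁ → Λ₂ → ℝ)
          (pM : (Fin (N - 2) → Outc) → Λ₂ → Λ₃ → ℝ),
        IsProbabilityMeasure μ₁ ∧ IsProbabilityMeasure μ₂ ∧ IsProbabilityMeasure μ₃ ∧
        (∀ a, @Measurable _ _ (m₃.prod m₁) _ fun q : Λ₃ × Λ₁ => p₁ a q.1 q.2) ∧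
        (∀ a, @Measurable _ _ (m₁.prod m₂) _ fun q : Λ₁ × Λ₂ => p₂ a q.1 q.2) ∧
        (∀ f, @Measurable _ _ (m₂.prod m₃) _ fun q : Λ₂ × Λ₃ => pM f q.1 q.2) ∧
        (∀ x y, (∀ a, 0 ≤ p₁ a x y) ∧ ∑ a, p₁ a x y = 1) ∧
        (∀ x y, (∀ a, 0 ≤ p₂ a x y) ∧ ∑ a, p₂ a x y = 1) ∧
        (∀ x y, (∀ f, 0 ≤ pM f x y) ∧ ∑ f : Fin (N - 2) → Outc, pM f x y = 1) ∧
        (∀ a : Fin N → Outc,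
          ringP N u a =
            ∫ x₁, ∫ x₂, ∫ x₃,
              p₁ (a ⟨0, by omega⟩) x₃ x₁ * p₂ (a ⟨1, by omega⟩) x₁ x₂
                * pM (fun k => a ⟨(k : ℕ) + 2, by have := k.isLt; omega⟩) x₂ x₃
              ∂μ₃ ∂μ₂ ∂μ₁) := by
  obtain ⟨n, rfl⟩ : ∃ n, N = n + 3 := ⟨N - 3, by omega⟩
  obtain ⟨t, ht, ht1, ht2, ht3⟩ := exists_odd_half (n + 3) hN hpar
  obtain ⟨ε, hε, hnear⟩ :=
    exists_near_one (Fintype.card (Fin (n + 1) → Outc)) (n + 1 + 2)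
  refine ⟨ε, hε, fun u hu hu1 => ?_⟩
  obtain ⟨hu0, hlarge⟩ := hnear u hu hu1
  rintro ⟨Λ₁, Λ₂, Λ₃, m₁, m₂, m₃, μ₁, μ₂, μ₃, p₁, p₂, pM, hμ₁, hμ₂, hμ₃, hp₁, hp₂, hpM,
    hn₁, hn₂, hnM, hloc⟩
  have hsq : u ^ 2 + √(1 - u ^ 2) ^ 2 = 1 := by
    rw [Real.sq_sqrt (by nlinarith)]
    ring
  obtain ⟨γ, hγ⟩ := exists_sum_gap_pos hu0 hu1 (p := n + 1) ht (by omega) (by omega) (by omega)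
    hlarge
  have hgap := token_inequality_gap n hsq γ
  have hsupp (j : Outc × Outc × (Fin (n + 1) → Outc)) (hj : mergedP n u j ≠ 0) :
      excess j.1 + excess j.2.1 + ∑ k, excess (j.2.2 k) = 0 := by
    have := sum_excess_of_ringP_ne_zero (n + 2) _ hj
    rw [Fin.sum_univ_succ, Fin.sum_univ_succ] at this
    simp only [Fin.cons_zero, Fin.cons_succ] at this
    linarith
  have hle := triangle_token_inequality (P := mergedP n u) (d := excess)
    (D := fun b : Fin (n + 1) → Outc => ∑ k, excess (b k)) hp₁ hp₂ hpM hn₁ hn₂ hnM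
    (fun j => hloc (Fin.cons j.1 (Fin.cons j.2.1 j.2.2 : Fin (n + 2) → Outc))) hsupp
    (sum_mergedP_excess n hsq) oneSign γ
  refine absurd hle (not_le.2 (sub_pos.1 ?_))
  exact (mul_pos (by positivity) hγ).trans_eq hgap.symm
end

section
/- Let N ≥ 4, u ∈ (0,1), v = √(1−u²), u₀ = u, v₀ = v, u₁ = v, v₁ = −u. Suppose there exist nonnegative reals q(𝐢,j,k|t), indexed by 𝐢 = (i₃,…,i_N) ∈ {0,1}^{N−2}, j, k ∈ {0,1} and t ∈ {cw, acw}, satisfying: (a) for all 𝐢, j, k: q(𝐢,j,k|cw) + q(𝐢,j,k|acw) = 2^{3−N}·(u_j u_k ∏_{n=3}^N u_{i_n} + v_j v_k ∏_{n=3}^N v_{i_n})²; (b) for all 𝐢: Σ_{j,k} q(𝐢,j,k|cw) = 2^{3−N}·∏_{n=3}^N v_{i_n}² and Σ_{j,k} q(𝐢,j,k|acw) = 2^{3−N}·∏_{n=3}^N u_{i_n}²; (c) for all j: Σ_{𝐢,k} q(𝐢,j,k|cw) = 2^{3−N}·v_j² and Σ_{𝐢,k} q(𝐢,j,k|acw)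 = 2^{3−N}·u_j², and likewise for all k: Σ_{𝐢,j} q(𝐢,j,k|cw) = 2^{3−N}·v_k² and Σ_{𝐢,j} q(𝐢,j,k|acw) = 2^{3−N}·u_k². Then there exists a probability distribution q' on {0,1}^N × {cw, acw} such that for all (i₁,…,i_N): q'(i₁,…,i_N,cw) + q'(i₁,…,i_N,acw) = ½·(∏_{n=1}^N u_{i_n} + ∏_{n=1}^N v_{i_n})², and for every position n ∈ {1,…,N} and every b ∈ {0,1}: Σ over configurations with i_n = b of q'(·,cw) = v_b²/2 and of q'(·,acw) = u_b²/2. -/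
open Finset in
/-- For weights of total mass one, the product weight has the given one-coordinate marginals. -/
theorem sum_ite_prod_eq {ι α : Type*} [Fintype ι] [DecidableEq ι] [Fintype α] [DecidableEq α]
    (w : α → ℝ) (hw : ∑ x, w x = 1) (n : ι) (b : α) :
    (∑ I : ι → α, if I n = b then ∏ m, w (I m) else 0) = w b := by
  have h : ∀ I : ι → α, (if I n = b then ∏ m, w (I m) else 0)
      = ∏ m, (if m = n ∧ I m ≠ b then 0 else w (I m)) := by
    intro I
    split_ifs with hI
    · refine prod_congr rfl fun m _ => (if_neg ?_).symm
      rintro ⟨rfl, hm⟩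
      exact hm hI
    · refine (prod_eq_zero (mem_univ n) ?_).symm
      exact if_pos ⟨rfl, hI⟩
  have hps := Finset.prod_univ_sum (fun _ : ι => (univ : Finset α))
    (fun m x => if m = n ∧ x ≠ b then 0 else w x)
  rw [Fintype.piFinset_univ] at hps
  rw [sum_congr rfl fun I _ => h I, ← hps, prod_eq_single n]
  · simp [ite_not]
  · intro m _ hm
    simp [hm, hw]
  · simp

theorem sum_fin_add_two_pi {α : Type*} [Fintype α] (M : ℕ) (F : (Fin (M + 2) → α) → ℝ) :
    ∑ i, F i = ∑ j, ∑ k, ∑ I : Fin M → α, F (Fin.cons j (Fin.cons k I : Fin (M + 1) → α)) := by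
  rw [← (Fin.consEquiv fun _ : Fin (M + 2) => α).sum_comp, Fintype.sum_prod_type]
  refine Finset.sum_congr rfl fun j _ => ?_
  rw [← (Fin.consEquiv fun _ : Fin (M + 1) => α).sum_comp, Fintype.sum_prod_type]
  rfl

/-- A joint weight on `(Fin M → α) × α × α` whose block marginals are `c` times the product weight,
respectively `c` times `w`, has all one-coordinate marginals equal to `c * w`. -/
theorem sum_ite_eq_of_block_marginals {α : Type*} [Fintype α] [DecidableEq α] (M : ℕ) (c : ℝ)
    (w : α → ℝ) (hw : ∑ x, w x = 1) (p : (Fin M → α) → α → α → ℝ)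
    (hI : ∀ I, ∑ j, ∑ k, p I j k = c * ∏ n, w (I n))
    (hj : ∀ j, ∑ I, ∑ k, p I j k = c * w j)
    (hk : ∀ k, ∑ I, ∑ j, p I j k = c * w k) (n : Fin (M + 2)) (b : α) :
    (∑ i : Fin (M + 2) → α, if i n = b then p (fun m => i m.succ.succ) (i 0) (i 1) else 0)
      = c * w b := by
  rw [sum_fin_add_two_pi]
  refine Fin.cases ?_ (fun n => Fin.cases ?_ (fun n => ?_) n) n
  · simp only [Fin.cons_succ, Fin.cons_zero, Fin.cons_one]
    rw [← hj b, Finset.sum_comm]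
    simp_rw [Finset.sum_comm (s := (Finset.univ : Finset (Fin M → α)))]
    rw [Finset.sum_comm]
    simp
  · simp only [Fin.cons_succ, Fin.cons_zero, Fin.cons_one]
    rw [← hk b]
    rw [Finset.sum_comm (s := (Finset.univ : Finset (Fin M → α)))]
    refine Finset.sum_congr rfl fun j _ => ?_
    rw [Finset.sum_comm]
    simp
  · simp only [Fin.cons_succ, Fin.cons_zero, Fin.cons_one]
    have h : ∀ I : Fin M → α, (∑ j, ∑ k, if I n = b then p I j k else 0)
        = c * if I n = b then ∏ m, w (I m) else 0 := by
      intro I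
      split_ifs with h
      · exact hI I
      · simp
    rw [← sum_ite_prod_eq w hw n b, Finset.mul_sum, ← Finset.sum_congr rfl fun I _ => h I,
      Finset.sum_comm (s := (Finset.univ : Finset (Fin M → α)))]
    exact Finset.sum_congr rfl fun j _ => Finset.sum_comm

theorem sum_uco_sq {u : ℝ} (hu0 : 0 < u) (hu1 : u < 1) : ∑ x, uco u x ^ 2 = 1 := by
  have h : 0 ≤ 1 - u ^ 2 := by nlinarith
  simp [uco, Real.sq_sqrt h]

theorem sum_vco_sq {u : ℝ} (hu0 : 0 < u) (hu1 : u < 1) : ∑ x, vco u x ^ 2 = 1 := by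
  have h : 0 ≤ 1 - u ^ 2 := by nlinarith
  simp [vco, Real.sq_sqrt h]

/-- change of variables reducing the triangle LP (arising from the
merged `N`-ring network) to the `N`-party ring LP.  The token direction `cw` is
encoded by `true`, `acw` by `false`; `𝐢 : Fin (N-2) → Fin 2` collects `(i₃,…,i_N)`. -/
theorem stmt_17 (N : ℕ) (hN : 4 ≤ N) (u : ℝ) (hu0 : 0 < u) (hu1 : u < 1)
    (q : (Fin (N - 2) → Fin 2) → Fin 2 → Fin 2 → Bool → ℝ)
    (hq0 : ∀ I j k t, 0 ≤ q I j k t)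
    (ha : ∀ (I : Fin (N - 2) → Fin 2) (j k : Fin 2),
      q I j k true + q I j k false =
        (2 : ℝ) ^ ((3 : ℤ) - (N : ℤ)) *
          (uco u j * uco u k * ∏ n, uco u (I n)
            + vco u j * vco u k * ∏ n, vco u (I n)) ^ 2)
    (hbcw : ∀ I : Fin (N - 2) → Fin 2,
      (∑ j, ∑ k, q I j k true) = (2 : ℝ) ^ ((3 : ℤ) - (N : ℤ)) * ∏ n, (vco u (I n)) ^ 2)
    (hbacw : ∀ I : Fin (N - 2) → Fin 2,
      (∑ j, ∑ k, q I j k false) = (2 : ℝ) ^ ((3 : ℤ) - (N : ℤ)) * ∏ n, (uco u (I n)) ^ 2)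
    (hjcw : ∀ j, (∑ I, ∑ k, q I j k true) = (2 : ℝ) ^ ((3 : ℤ) - (N : ℤ)) * (vco u j) ^ 2)
    (hjacw : ∀ j, (∑ I, ∑ k, q I j k false) = (2 : ℝ) ^ ((3 : ℤ) - (N : ℤ)) * (uco u j) ^ 2)
    (hkcw : ∀ k, (∑ I, ∑ j, q I j k true) = (2 : ℝ) ^ ((3 : ℤ) - (N : ℤ)) * (vco u k) ^ 2)
    (hkacw : ∀ k, (∑ I, ∑ j, q I j k false) = (2 : ℝ) ^ ((3 : ℤ) - (N : ℤ)) * (uco u k) ^ 2) :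
    ∃ q' : (Fin N → Fin 2) → Bool → ℝ,
      (∀ i t, 0 ≤ q' i t) ∧
      (∑ i, (q' i true + q' i false)) = 1 ∧
      (∀ i : Fin N → Fin 2,
        q' i true + q' i false = (1 / 2) * (∏ n, uco u (i n) + ∏ n, vco u (i n)) ^ 2) ∧
      (∀ (n : Fin N) (b : Fin 2),
        (∑ i : Fin N → Fin 2, if i n = b then q' i true else 0) = (vco u b) ^ 2 / 2 ∧
        (∑ i : Fin N → Fin 2, if i n = b then q' i false else 0) = (uco u b) ^ 2 / 2) := by
  obtain ⟨M, rfl⟩ : ∃ M, N = M + 2 := ⟨N - 2, by omega⟩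
  change (Fin M → Fin 2) → Fin 2 → Fin 2 → Bool → ℝ at q
  have hc : (0 : ℝ) < (2 : ℝ) ^ ((3 : ℤ) - ((M + 2 : ℕ) : ℤ)) := by positivity
  generalize (2 : ℝ) ^ ((3 : ℤ) - ((M + 2 : ℕ) : ℤ)) = c at *
  have hu := sum_uco_sq hu0 hu1
  have hv := sum_vco_sq hu0 hu1
  let q' : (Fin (M + 2) → Fin 2) → Bool → ℝ :=
    fun i t => (2 * c)⁻¹ * q (fun m => i m.succ.succ) (i 0) (i 1) t
  have hmarg : ∀ (t : Bool) (n : Fin (M + 2)) (b : Fin 2) (x : ℝ),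
      (∑ i : Fin (M + 2) → Fin 2,
        if i n = b then q (fun m => i m.succ.succ) (i 0) (i 1) t else 0) = c * x →
      (∑ i : Fin (M + 2) → Fin 2, if i n = b then q' i t else 0) = x / 2 := by
    intro t n b x h
    simp only [q', ← mul_ite_zero, ← Finset.mul_sum, h]
    field_simp
  have hcw : ∀ (n : Fin (M + 2)) (b : Fin 2),
      (∑ i : Fin (M + 2) → Fin 2, if i n = b then q' i true else 0) = vco u b ^ 2 / 2 :=
    fun n b => hmarg true n b _ (sum_ite_eq_of_block_marginals M c (fun x => vco u x ^ 2) hv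
      (fun I j k => q I j k true) hbcw hjcw hkcw n b)
  have hacw : ∀ (n : Fin (M + 2)) (b : Fin 2),
      (∑ i : Fin (M + 2) → Fin 2, if i n = b then q' i false else 0) = uco u b ^ 2 / 2 :=
    fun n b => hmarg false n b _ (sum_ite_eq_of_block_marginals M c (fun x => uco u x ^ 2) hu
      (fun I j k => q I j k false) hbacw hjacw hkacw n b)
  have htotal : ∀ t, ∑ i, q' i t
      = ∑ b, ∑ i : Fin (M + 2) → Fin 2, if i 0 = b then q' i t else 0 := by
    intro t
    rw [Finset.sum_comm]
    simp
  refine ⟨q', fun i t => mul_nonneg (by positivity) (hq0 _ _ _ _), ?_, fun i => ?_,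
    fun n b => ⟨hcw n b, hacw n b⟩⟩
  · rw [Finset.sum_add_distrib, htotal, htotal]
    simp only [hcw, hacw, ← Finset.sum_div, hu, hv]
    norm_num
  · have h : q (fun m => i m.succ.succ) (i 0) (i 1) true
          + q (fun m => i m.succ.succ) (i 0) (i 1) false
        = c * (uco u (i 0) * uco u (i 1) * ∏ n : Fin M, uco u (i n.succ.succ)
          + vco u (i 0) * vco u (i 1) * ∏ n : Fin M, vco u (i n.succ.succ)) ^ 2 :=
      ha (fun m => i m.succ.succ) (i 0) (i 1)
    simp only [q', ← mul_add]
    rw [h]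
    simp only [Fin.prod_univ_succ (n := M + 1), Fin.prod_univ_succ (n := M), Fin.succ_zero_eq_one,
      ← mul_assoc]
    field_simp
end

section
/- For every N ≥ 3 that is either odd or divisible by 4, there exists ε > 0 (depending on N) such that for all real u with 1−ε < u < 1, with v = √(1−u²), u₀ = u, v₀ = v, u₁ = v, v₁ = −u, there is no probability distribution q on {0,1}^N × {cw, acw} (nonnegative, summing to 1) satisfying: (i) for all (i₁,…,i_N) ∈ {0,1}^N: q(i₁,…,i_N, cw) + q(i₁,…,i_N, acw) = ½·(∏_{n=1}^N u_{i_n} + ∏_{n=1}^N v_{i_n})²; and (ii) for every position n ∈ {1,…,N} and every b ∈ {0,1}: the marginal probability of the event {i_n = b, t = cw} equals v_b²/2 and the marginal probability of {i_n = b, t = acw} equals u_b²/2. -/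
/-- The number of ones in a binary string. -/
def weight {N : ℕ} (i : Fin N → Fin 2) : ℕ := ∑ n, (i n : ℕ)

lemma weight_le {N : ℕ} (i : Fin N → Fin 2) : weight i ≤ N := by
  calc weight i ≤ ∑ _n : Fin N, 1 := Finset.sum_le_sum fun n _ => by omega
    _ = N := by simp

lemma sum_one_sub_eq_sub_weight {N : ℕ} (i : Fin N → Fin 2) :
    ∑ n, (1 - (i n : ℕ)) = N - weight i := by
  have h : ∑ n, (1 - (i n : ℕ)) + weight i = N := by
    rw [weight, ← Finset.sum_add_distrib]
    calc ∑ n, (1 - (i n : ℕ) + (i n : ℕ)) = ∑ _n : Fin N, 1 :=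
          Finset.sum_congr rfl fun n _ => by omega
      _ = N := by simp
  omega

lemma prod_vecCons_eq_pow_weight {N : ℕ} (a b : ℝ) (i : Fin N → Fin 2) :
    ∏ n, (![a, b] : Fin 2 → ℝ) (i n) = a ^ (N - weight i) * b ^ weight i := by
  have h (c : Fin 2) : (![a, b] : Fin 2 → ℝ) c = a ^ (1 - (c : ℕ)) * b ^ (c : ℕ) := by
    fin_cases c <;> simp
  simp_rw [h]
  rw [Finset.prod_mul_distrib, Finset.prod_pow_eq_pow_sum, Finset.prod_pow_eq_pow_sum,
    sum_one_sub_eq_sub_weight, weight]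

lemma sum_apply_weight (N : ℕ) (f : ℕ → ℝ) :
    ∑ i : Fin N → Fin 2, f (weight i) = ∑ k ∈ Finset.range (N + 1), (N.choose k : ℝ) * f k := by
  have h := Finset.sum_powerset_apply_card f (x := (Finset.univ : Finset (Fin N)))
  simp only [Finset.card_univ, Fintype.card_fin, nsmul_eq_mul] at h
  rw [← h]
  refine Finset.sum_bij' (fun i _ => Finset.univ.filter fun n => i n = 1)
    (fun s _ n => if n ∈ s then 1 else 0) (by simp) (by simp) ?_ ?_ ?_
  · intro i _
    ext n
    have : i n = 0 ∨ i n = 1 := by omega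
    rcases this with h | h <;> simp [h]
  · intro s _
    ext n
    simp
  · intro i _
    congr 1
    rw [weight, Finset.card_filter]
    refine Finset.sum_congr rfl fun n _ => ?_
    have : i n = 0 ∨ i n = 1 := by omega
    rcases this with h | h <;> simp [h]

lemma sum_binomial_weight (N : ℕ) (x : ℝ) :
    ∑ i : Fin N → Fin 2, (1 - x) ^ (N - weight i) * x ^ weight i = 1 := by
  rw [sum_apply_weight N fun k => (1 - x) ^ (N - k) * x ^ k]
  have h := congrArg (Polynomial.eval x) (bernsteinPolynomial.sum ℝ N)
  simp only [bernsteinPolynomial, Polynomial.eval_finsetSum, Polynomial.eval_mul,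
    Polynomial.eval_pow, Polynomial.eval_sub, Polynomial.eval_X, Polynomial.eval_one,
    Polynomial.eval_natCast] at h
  refine Eq.trans ?_ h
  exact Finset.sum_congr rfl fun k _ => by ring

lemma sum_binomial_weight_mul (N : ℕ) (x : ℝ) :
    ∑ i : Fin N → Fin 2, (1 - x) ^ (N - weight i) * x ^ weight i * (weight i : ℝ) = N * x := by
  rw [sum_apply_weight N fun k => (1 - x) ^ (N - k) * x ^ k * (k : ℝ)]
  have h := congrArg (Polynomial.eval x) (bernsteinPolynomial.sum_smul ℝ N)
  simp only [bernsteinPolynomial, Polynomial.eval_finsetSum, Polynomial.eval_mul,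
    Polynomial.eval_pow, Polynomial.eval_sub, Polynomial.eval_X, Polynomial.eval_one,
    Polynomial.eval_natCast, nsmul_eq_mul] at h
  rw [← h]
  exact Finset.sum_congr rfl fun k _ => by ring

lemma alternating_sum_choose_mul_tsub (M θ : ℕ) (hθ : θ ≤ M + 1) :
    ∑ k ∈ Finset.range (M + 3), (-1 : ℤ) ^ k * (M + 2).choose k * ((θ + 1 - k : ℕ) : ℤ) =
      (-1) ^ θ * M.choose θ := by
  have partial_sum (m : ℕ) (hm : m ≤ M + 2) :
      ∑ k ∈ Finset.range (M + 3), (-1 : ℤ) ^ k * (M + 2).choose k * (if k ≤ m then 1 else 0) =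
        (-1) ^ m * (M + 1).choose m := by
    simp only [mul_ite, mul_one, mul_zero]
    rw [← Finset.sum_filter, ← Int.alternating_sum_range_choose_eq_choose]
    refine Finset.sum_congr ?_ fun _ _ => rfl
    ext k
    simp only [Finset.mem_filter, Finset.mem_range]
    omega
  induction θ with
  | zero =>
    have h := partial_sum 0 (by omega)
    rw [Nat.choose_zero_right] at h ⊢
    rw [← h]
    refine Finset.sum_congr rfl fun k _ => ?_
    rcases k with _ | k <;> simp
  | succ θ ih =>
    have h := partial_sum (θ + 1) (by omega)
    have hs (k : ℕ) : ((θ + 1 + 1 - k : ℕ) : ℤ) =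
        ((θ + 1 - k : ℕ) : ℤ) + (if k ≤ θ + 1 then 1 else 0) := by
      split_ifs <;> omega
    simp_rw [hs, mul_add]
    rw [Finset.sum_add_distrib, ih (by omega), h, Nat.choose_succ_succ]
    push_cast
    ring

lemma sum_neg_one_pow_weight_mul_tsub (M θ : ℕ) (hθ : θ ≤ M + 1) :
    ∑ i : Fin (M + 2) → Fin 2, (-1 : ℝ) ^ weight i * ((θ + 1 - weight i : ℕ) : ℝ) =
      (-1) ^ θ * M.choose θ := by
  rw [sum_apply_weight (M + 2) fun k => (-1 : ℝ) ^ k * ((θ + 1 - k : ℕ) : ℝ)]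
  have h := congrArg (Int.cast : ℤ → ℝ) (alternating_sum_choose_mul_tsub M θ hθ)
  push_cast at h
  rw [← h]
  exact Finset.sum_congr rfl fun k _ => by ring

lemma sum_mul_weight_of_marginal {N : ℕ} (p : (Fin N → Fin 2) → ℝ) (c : ℝ)
    (h : ∀ n, (∑ i : Fin N → Fin 2, if i n = 1 then p i else 0) = c) :
    ∑ i, p i * (weight i : ℝ) = N * c := by
  have hw (i : Fin N → Fin 2) :
      p i * (weight i : ℝ) = ∑ n, if i n = 1 then p i else 0 := by
    rw [weight, Nat.cast_sum, Finset.mul_sum]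
    refine Finset.sum_congr rfl fun n _ => ?_
    have : i n = 0 ∨ i n = 1 := by omega
    rcases this with h | h <;> simp [h]
  simp_rw [hw]
  rw [Finset.sum_comm]
  simp [h]

lemma sum_eq_of_marginal {N : ℕ} (p : (Fin N → Fin 2) → ℝ) (n : Fin N) :
    ∑ i, p i = (∑ i : Fin N → Fin 2, if i n = 0 then p i else 0) +
      ∑ i : Fin N → Fin 2, if i n = 1 then p i else 0 := by
  rw [← Finset.sum_add_distrib]
  refine Finset.sum_congr rfl fun i _ => ?_
  have : i n = 0 ∨ i n = 1 := by omega
  rcases this with h | h <;> simp [h]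

/-- If `q` is at most half the squared amplitude `u ^ (N - k) v ^ k + v ^ (N - k) (-u) ^ k` and `θ`
is within distance less than one of `N / 2`, then testing the excess of `q` over the first squared
term against `θ - k` leaves only the interference term, up to order `v ^ (N + 1)`. -/
lemma sub_mul_threshold_le {N θ k : ℕ} (hk : k ≤ N) (hθN : θ ≤ N) (hlo : N < 2 * θ + 2)
    (hhi : 2 * θ < N + 2) {u v q : ℝ} (hu0 : 0 ≤ u) (hu1 : u ≤ 1) (hv0 : 0 ≤ v) (hv1 : v ≤ 1)
    (hq0 : 0 ≤ q)
    (hq : q ≤ 1 / 2 * (u ^ (N - k) * v ^ k + v ^ (N - k) * (-u) ^ k) ^ 2) :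
    (q - 1 / 2 * (u ^ (N - k) * v ^ k) ^ 2) * ((θ : ℝ) - k) ≤
      N * v ^ (N + 1) + u ^ N * v ^ N * ((-1) ^ k * ((θ - k : ℕ) : ℝ)) := by
  have key {a b : ℕ} (hb : N + 1 ≤ 2 * b) : (u ^ a * v ^ b) ^ 2 ≤ v ^ (N + 1) := by
    calc (u ^ a * v ^ b) ^ 2 = (u ^ a) ^ 2 * v ^ (2 * b) := by ring
      _ ≤ 1 * v ^ (N + 1) := by
        gcongr ?_ * ?_
        · exact pow_le_one₀ (by positivity) (pow_le_one₀ hu0 hu1)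
        · exact pow_le_pow_of_le_one hv0 hv1 hb
      _ = v ^ (N + 1) := one_mul _
  have hv : 0 ≤ v ^ (N + 1) := by positivity
  rcases lt_trichotomy k θ with hkθ | rfl | hkθ
  · obtain ⟨d, rfl⟩ := Nat.exists_eq_add_of_lt hkθ
    have hB := key (a := k) (b := N - k) (by omega)
    have hd : ((k + d + 1 - k : ℕ) : ℝ) = d + 1 := by
      rw [show k + d + 1 - k = d + 1 by omega]; push_cast; rfl
    have hdN : (d : ℝ) + 1 ≤ N := by
      exact_mod_cast (by omega : d + 1 ≤ N)
    have hX : u ^ (N - k) * v ^ k * (v ^ (N - k) * (-u) ^ k) = u ^ N * v ^ N * (-1) ^ k := by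
      obtain ⟨e, rfl⟩ := Nat.exists_eq_add_of_le hk
      rw [Nat.add_sub_cancel_left, neg_pow u]
      ring
    have hsq : (v ^ (N - k) * (-u) ^ k) ^ 2 = (u ^ k * v ^ (N - k)) ^ 2 := by
      rw [mul_pow, ← pow_mul, ← pow_mul, mul_comm k 2, pow_mul (-u), neg_sq]
      ring
    rw [hd]
    have hle : q - 1 / 2 * (u ^ (N - k) * v ^ k) ^ 2 ≤
        v ^ (N + 1) + u ^ N * v ^ N * (-1) ^ k := by
      rw [add_sq, hsq, mul_assoc 2, hX] at hq
      linarith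
    push_cast
    calc _ = (q - 1 / 2 * (u ^ (N - k) * v ^ k) ^ 2) * ((d : ℝ) + 1) := by ring
      _ ≤ (v ^ (N + 1) + u ^ N * v ^ N * (-1) ^ k) * ((d : ℝ) + 1) := by gcongr
      _ = (d + 1) * v ^ (N + 1) + u ^ N * v ^ N * ((-1) ^ k * (d + 1)) := by ring
      _ ≤ _ := by gcongr
  · simp only [sub_self, mul_zero, Nat.sub_self, Nat.cast_zero, add_zero]
    positivity
  · have hA := key (a := N - k) (b := k) (by omega)
    have hkN : (k : ℝ) ≤ N := by exact_mod_cast hk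
    have hθk : (θ : ℝ) ≤ k := by exact_mod_cast hkθ.le
    have hθ0 : (0 : ℝ) ≤ θ := θ.cast_nonneg
    rw [Nat.sub_eq_zero_of_le hkθ.le, Nat.cast_zero, mul_zero, mul_zero, add_zero]
    calc _ = (1 / 2 * (u ^ (N - k) * v ^ k) ^ 2 - q) * ((k : ℝ) - θ) := by ring
      _ ≤ v ^ (N + 1) * N := by
        gcongr
        · linarith
        · linarith
      _ = _ := mul_comm _ _

lemma exists_odd_near_half {N : ℕ} (hN : 3 ≤ N) (hpar : N % 2 = 1 ∨ 4 ∣ N) :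
    ∃ θ, Odd θ ∧ θ + 2 ≤ N ∧ N < 2 * (θ + 1) + 2 ∧ 2 * (θ + 1) < N + 2 := by
  have h : N % 4 = 0 ∨ N % 4 = 1 ∨ N % 4 = 3 := by omega
  rcases h with h | h | h
  · exact ⟨N / 2 - 1, by rw [Nat.odd_iff]; omega, by omega, by omega, by omega⟩
  · exact ⟨(N - 1) / 2 - 1, by rw [Nat.odd_iff]; omega, by omega, by omega, by omega⟩
  · exact ⟨(N + 1) / 2 - 1, by rw [Nat.odd_iff]; omega, by omega, by omega, by omega⟩

/-- infeasibility of the `N`-party ring linear program for `N` odd or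
divisible by `4` and `u` close enough to `1`.  The token direction `cw` is encoded
by `true`, `acw` by `false`. -/
theorem stmt_18 (N : ℕ) (hN : 3 ≤ N) (hpar : N % 2 = 1 ∨ 4 ∣ N) :
    ∃ ε > (0 : ℝ), ∀ u : ℝ, 1 - ε < u → u < 1 →
      ¬ ∃ q : (Fin N → Fin 2) → Bool → ℝ,
        (∀ i t, 0 ≤ q i t) ∧
        (∑ i, (q i true + q i false)) = 1 ∧
        (∀ i : Fin N → Fin 2,
          q i true + q i false = (1 / 2) * (∏ n, uco u (i n) + ∏ n, vco u (i n)) ^ 2) ∧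
        (∀ (n : Fin N) (b : Fin 2),
          (∑ i : Fin N → Fin 2, if i n = b then q i true else 0) = (vco u b) ^ 2 / 2 ∧
          (∑ i : Fin N → Fin 2, if i n = b then q i false else 0) = (uco u b) ^ 2 / 2) := by
  obtain ⟨θ, hodd, hθN, hlo, hhi⟩ := exists_odd_near_half hN hpar
  have hNpos : (0 : ℝ) < N := by exact_mod_cast (by omega : 0 < N)
  set δ : ℝ := 1 / (N * 4 ^ N) with hδ
  have hδ0 : 0 < δ := by positivity
  have hδ1 : δ ≤ 1 := by
    rw [hδ, div_le_one (by positivity)]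
    have h1 : (1 : ℝ) ≤ N := by exact_mod_cast (by omega : 1 ≤ N)
    exact one_le_mul_of_one_le_of_one_le h1 (one_le_pow₀ (by norm_num))
  refine ⟨δ ^ 2 / 2, by positivity, fun u hu hu1 => ?_⟩
  rintro ⟨q, hq0, -, hq, hmarg⟩
  have hu2 : 1 / 2 ≤ u := by nlinarith
  have hu0 : 0 ≤ u := by linarith
  set v : ℝ := Real.sqrt (1 - u ^ 2)
  have hvsq : v ^ 2 = 1 - u ^ 2 := Real.sq_sqrt (by nlinarith)
  have hvpos : 0 < v := Real.sqrt_pos.2 (by nlinarith)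
  have hvδ : v < δ := lt_of_pow_lt_pow_left₀ 2 hδ0.le (by rw [hvsq]; nlinarith)
  have hv1 : v ≤ 1 := by linarith
  have husq : u ^ 2 = 1 - v ^ 2 := by linarith
  have hmass : ∑ i, q i false = 1 / 2 := by
    rw [sum_eq_of_marginal (fun i => q i false) ⟨0, by omega⟩, (hmarg _ 0).2, (hmarg _ 1).2]
    simp only [uco, Matrix.cons_val_zero, Matrix.cons_val_one]
    linarith
  have hmean : ∑ i, q i false * (weight i : ℝ) = N * (v ^ 2 / 2) :=
    sum_mul_weight_of_marginal (fun i => q i false) _ fun n => (hmarg n 1).2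
  have hA (i : Fin N → Fin 2) : (u ^ (N - weight i) * v ^ weight i) ^ 2 =
      (1 - v ^ 2) ^ (N - weight i) * (v ^ 2) ^ weight i := by
    rw [← husq]; ring
  have hzero : ∑ i, (q i false - 1 / 2 * (u ^ (N - weight i) * v ^ weight i) ^ 2) *
      (((θ + 1 : ℕ) : ℝ) - weight i) = 0 := by
    simp_rw [hA]
    have h1 := sum_binomial_weight N (v ^ 2)
    have h2 := sum_binomial_weight_mul N (v ^ 2)
    calc _ = ((θ + 1 : ℕ) : ℝ) * ∑ i, q i false - ∑ i, q i false * (weight i : ℝ) -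
          1 / 2 * ((θ + 1 : ℕ) : ℝ) *
            ∑ i : Fin N → Fin 2, (1 - v ^ 2) ^ (N - weight i) * (v ^ 2) ^ weight i +
          1 / 2 * ∑ i : Fin N → Fin 2,
            (1 - v ^ 2) ^ (N - weight i) * (v ^ 2) ^ weight i * (weight i : ℝ) := by
          simp only [Finset.mul_sum, ← Finset.sum_sub_distrib, ← Finset.sum_add_distrib]
          exact Finset.sum_congr rfl fun i _ => by ring
      _ = 0 := by rw [h1, h2, hmass, hmean]; ring
  have hbound : ∑ i, (q i false - 1 / 2 * (u ^ (N - weight i) * v ^ weight i) ^ 2) *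
      (((θ + 1 : ℕ) : ℝ) - weight i) ≤ ∑ i : Fin N → Fin 2, (N * v ^ (N + 1) +
        u ^ N * v ^ N * ((-1) ^ weight i * ((θ + 1 - weight i : ℕ) : ℝ))) := by
    refine Finset.sum_le_sum fun i _ => ?_
    refine sub_mul_threshold_le (weight_le i) (by omega) hlo hhi hu0 hu1.le hvpos.le hv1
      (hq0 i false) ?_
    have h := hq i
    simp only [uco, vco, prod_vecCons_eq_pow_weight] at h
    linarith [hq0 i true]
  have halt : ∑ i : Fin N → Fin 2, (-1 : ℝ) ^ weight i * ((θ + 1 - weight i : ℕ) : ℝ) ≤ -1 := by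
    obtain ⟨M, rfl⟩ := Nat.exists_eq_add_of_le' (by omega : 2 ≤ N)
    rw [sum_neg_one_pow_weight_mul_tsub M θ (by omega), hodd.neg_one_pow]
    have : (1 : ℝ) ≤ M.choose θ := by exact_mod_cast Nat.choose_pos (by omega : θ ≤ M)
    linarith
  rw [hzero, Finset.sum_add_distrib, Finset.sum_const, Finset.card_univ, Fintype.card_fun,
    Fintype.card_fin, Fintype.card_fin, nsmul_eq_mul, ← Finset.mul_sum] at hbound
  push_cast at hbound
  have hvN : 0 < v ^ N := by positivity
  have huN : (1 / 2 : ℝ) ^ N ≤ u ^ N := by gcongr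
  have hsmall : (2 : ℝ) ^ N * N * v < (1 / 2) ^ N := by
    calc (2 : ℝ) ^ N * N * v < 2 ^ N * N * δ := by gcongr
      _ = (1 / 2) ^ N := by
        rw [hδ, show (4 : ℝ) = 2 * 2 by norm_num, mul_pow, one_div_pow]
        field_simp
  have hfinal : u ^ N * v ^ N ≤ 2 ^ N * N * v * v ^ N := by
    have h := mul_le_mul_of_nonneg_left halt (by positivity : 0 ≤ u ^ N * v ^ N)
    rw [pow_succ] at hbound
    linarith
  exact absurd (le_of_mul_le_mul_right hfinal hvN) (by linarith)
end
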